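/- arXiv:math/0506046 — 2 statements merged into one kernel-verified Lean document; each statement's English description precedes it below -/
import Mathlib

section
/- Let F be an algebraically closed field of characteristic different from 2 and n ≥ 1. Let H(F_n) denote the space of symmetric n×n matrices over F with the Jordan product x∘y = (xy+yx)/2. Then H(F_n) ≠ A + B for any two proper simple Jordan subalgebras A and B of H(F_n). -/
open Matrix

namespace HFn

variable (F : Type*) [Field F]

/-- `H(F_k)`: the space of symmetric `k×k` matrices over `F`. -/
def symSub (k : ℕ) : Submodule F (Matrix (Fin k) (Fin k) F) where
  carrier := {X | Xᵀ = X}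
  zero_mem' := Matrix.transpose_zero
  add_mem' := by
    intro a b (ha : aᵀ = a) (hb : bᵀ = b)
    show (a + b)ᵀ = a + b
    rw [Matrix.transpose_add, ha, hb]
  smul_mem' := by
    intro c a (ha : aᵀ = a)
    show (c • a)ᵀ = c • a
    rw [Matrix.transpose_smul, ha]

variable {F}

/-- The Jordan product `x∘y = (xy+yx)/2`. -/
def jp {k : ℕ} (X Y : Matrix (Fin k) (Fin k) F) : Matrix (Fin k) (Fin k) F :=
  (2 : F)⁻¹ • (X * Y + Y * X)

variable (F)

/-- A simple Jordan subalgebra of `H(F_n)`: `A∘A ≠ 0` and the only subspaces `I ⊆ A`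
with `A∘I ⊆ I` are `0` and `A`. -/
def IsSimpleJordan {k : ℕ} (A : Submodule F (Matrix (Fin k) (Fin k) F)) : Prop :=
  (∃ x ∈ A, ∃ y ∈ A, jp x y ≠ 0) ∧
  ∀ I : Submodule F (Matrix (Fin k) (Fin k) F), I ≤ A →
    (∀ x ∈ A, ∀ y ∈ I, jp x y ∈ I) → I = ⊥ ∨ I = A

/-!
A simple Jordan algebra `A` of symmetric matrices is nondegenerate: its absolute zero divisors span
an ideal, which is nilpotent by Jacobson's theorem on weakly closed sets. Hence `A` has a frame of
`m` orthogonal absolutely primitive idempotents, whose sum is the unit of `A`; any two of them are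
connected by partial isometries `u` with `u uᵀ = e i` and `uᵀ u = e j`, so they have the same
rank `r`. If `r = 1` and the frame sums to `1`, then `A = H(F_n)`. For proper `A` this leaves two
possibilities: either the frame does not sum to `1` and `A` annihilates a nonzero vector, or `r ≥ 2`
and counting Peirce blocks, each of dimension at most `r`, gives `4 dim A < n (n + 1)`.

If `A + B = H(F_n)`, the two dimensions cannot both be that small, so one of the algebras, say `B`,
annihilates a vector `v ≠ 0`, and then `A v = H(F_n) v = F^n`. A vector annihilated by `A` would be
orthogonal to `A v`, so the frame of `A` sums to `1` and `r ≥ 2`. The coordinate algebra of `A`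
relative to its frame is a composition algebra acting on a space of dimension `r ≥ 2`; it commutes
with a nonzero skew-symmetric matrix, and repeating that matrix along the frame produces a skew
`t ≠ 0` commuting with `A`. But then `t v ⟂ A v` forces `t v = 0` and `t (A v) = A (t v) = 0`.
-/

section JordanClosed

variable {F R : Type*} [Field F] [Ring R] [Algebra F R]

/-- A subspace of an associative algebra closed under the anticommutator `xy + yx`, i.e. (in
characteristic other than two) a special Jordan algebra. -/
def IsJordanClosed (A : Submodule F R) : Prop :=
  ∀ ⦃x⦄, x ∈ A → ∀ ⦃y⦄, y ∈ A → x * y + y * x ∈ A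

variable {A : Submodule F R} {a b x y z : R}

lemma mem_of_add_self_mem [NeZero (2 : F)] (h : x + x ∈ A) : x ∈ A := by
  rwa [← two_smul F x, A.smul_mem_iff two_ne_zero] at h

namespace IsJordanClosed

variable [NeZero (2 : F)]

lemma mul_self_mem (hA : IsJordanClosed A) (hx : x ∈ A) : x * x ∈ A :=
  mem_of_add_self_mem (hA hx hx)

lemma mul_mul_self_mem (hA : IsJordanClosed A) (hx : x ∈ A) (hy : y ∈ A) :
    x * y * x ∈ A := by
  refine mem_of_add_self_mem ?_
  convert A.sub_mem (hA hx (hA hx hy)) (hA (hA.mul_self_mem hx) hy) using 1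
  noncomm_ring

lemma triple_mem (hA : IsJordanClosed A) (hx : x ∈ A) (hy : y ∈ A) (hz : z ∈ A) :
    x * y * z + z * y * x ∈ A := by
  convert A.sub_mem (A.sub_mem (hA.mul_mul_self_mem (A.add_mem hx hz) hy)
    (hA.mul_mul_self_mem hx hy)) (hA.mul_mul_self_mem hz hy) using 1
  noncomm_ring

lemma one_add_mul_mul_one_add_mem (hA : IsJordanClosed A) (hb : b ∈ A) (hx : x ∈ A) :
    (1 + b) * x * (1 + b) ∈ A := by
  convert A.add_mem (A.add_mem hx (hA hb hx)) (hA.mul_mul_self_mem hb hx) using 1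
  noncomm_ring

end IsJordanClosed

/-- The absolute zero divisors of `A`, i.e. the `z ∈ A` with `z A z = 0`. As `A` need not contain
`1`, the condition `z² = 0` is imposed separately. -/
def absoluteZeroDivisors (A : Submodule F R) : Set R :=
  {z | z ∈ A ∧ z * z = 0 ∧ ∀ a ∈ A, z * a * z = 0}

lemma mul_mul_mul_eq_neg_of_mem_absoluteZeroDivisors (hA : IsJordanClosed A)
    (hz : z ∈ absoluteZeroDivisors A) (ha : a ∈ A) (hb : b ∈ A) :
    z * a * b * z = -(z * b * a * z) := by
  rw [eq_neg_iff_add_eq_zero, ← hz.2.2 _ (hA ha hb)]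
  noncomm_ring

lemma anticommutator_mem_absoluteZeroDivisors (hA : IsJordanClosed A)
    (hx : x ∈ absoluteZeroDivisors A) (hy : y ∈ absoluteZeroDivisors A) :
    x * y + y * x ∈ absoluteZeroDivisors A := by
  have hxyx : x * y * x = 0 := hx.2.2 y hy.1
  have hyxy : y * x * y = 0 := hy.2.2 x hx.1
  refine ⟨hA hx.1 hy.1, ?_, fun a ha ↦ ?_⟩
  · calc (x * y + y * x) * (x * y + y * x)
        = x * y * x * y + x * (y * y) * x + y * (x * x) * y + y * x * y * x := by noncomm_ring
      _ = 0 := by simp [hxyx, hyxy, hx.2.1, hy.2.1]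
  · calc (x * y + y * x) * a * (x * y + y * x)
        = x * y * a * x * y + x * (y * a * y) * x + y * (x * a * x) * y + y * x * a * y * x := by
          noncomm_ring
      _ = -(x * a * (y * x * y)) - y * a * (x * y * x) := by
          rw [hx.2.2 a ha, hy.2.2 a ha,
            mul_mul_mul_eq_neg_of_mem_absoluteZeroDivisors hA hx hy.1 ha,
            mul_mul_mul_eq_neg_of_mem_absoluteZeroDivisors hA hy hx.1 ha]
          noncomm_ring
      _ = 0 := by simp [hxyx, hyxy]

lemma mul_mul_self_mem_absoluteZeroDivisors [NeZero (2 : F)] (hA : IsJordanClosed A)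
    (hz : z ∈ absoluteZeroDivisors A) (hb : b ∈ A) : b * z * b ∈ absoluteZeroDivisors A := by
  refine ⟨hA.mul_mul_self_mem hb hz.1, ?_, fun a ha ↦ ?_⟩
  · calc b * z * b * (b * z * b) = b * (z * (b * b) * z) * b := by noncomm_ring
      _ = 0 := by simp [hz.2.2 _ (hA.mul_self_mem hb)]
  · calc b * z * b * a * (b * z * b) = b * (z * (b * a * b) * z) * b := by noncomm_ring
      _ = 0 := by simp [hz.2.2 _ (hA.mul_mul_self_mem hb ha)]

lemma one_add_mul_mul_one_add_mem_absoluteZeroDivisors [NeZero (2 : F)] (hA : IsJordanClosed A)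
    (hz : z ∈ absoluteZeroDivisors A) (hb : b ∈ A) :
    (1 + b) * z * (1 + b) ∈ absoluteZeroDivisors A := by
  refine ⟨hA.one_add_mul_mul_one_add_mem hb hz.1, ?_, fun a ha ↦ ?_⟩
  · calc (1 + b) * z * (1 + b) * ((1 + b) * z * (1 + b))
        = (1 + b) * (z * z + z * (b + b + b * b) * z) * (1 + b) := by noncomm_ring
      _ = 0 := by
          rw [hz.2.1, hz.2.2 _ (A.add_mem (A.add_mem hb hb) (hA.mul_self_mem hb))]; simp
  · calc (1 + b) * z * (1 + b) * a * ((1 + b) * z * (1 + b))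
        = (1 + b) * (z * ((1 + b) * a * (1 + b)) * z) * (1 + b) := by noncomm_ring
      _ = 0 := by rw [hz.2.2 _ (hA.one_add_mul_mul_one_add_mem hb ha)]; simp

lemma anticommutator_mem_span_absoluteZeroDivisors [NeZero (2 : F)] (hA : IsJordanClosed A)
    (hb : b ∈ A) (hy : y ∈ Submodule.span F (absoluteZeroDivisors A)) :
    b * y + y * b ∈ Submodule.span F (absoluteZeroDivisors A) := by
  induction hy using Submodule.span_induction with
  | mem z hz =>
    have hU := Submodule.subset_span (R := F) (mul_mul_self_mem_absoluteZeroDivisors hA hz hb)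
    have hV := Submodule.subset_span (R := F)
      (one_add_mul_mul_one_add_mem_absoluteZeroDivisors hA hz hb)
    convert sub_mem (sub_mem hV hU) (Submodule.subset_span hz) using 1
    noncomm_ring
  | zero => simp
  | add x y _ _ hx hy =>
    convert add_mem hx hy using 1
    noncomm_ring
  | smul c x _ hx =>
    convert Submodule.smul_mem _ c hx using 1
    simp

end JordanClosed

section WeaklyClosed

variable {F R : Type*} [Field F] [Ring R] [Algebra F R]

/-- The span of the products `a₁ ⋯ aᵢ r b₁ ⋯ bⱼ` with `i + j = l`, where `aₖ, bₖ ∈ N` and `r` is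
arbitrary. -/
def twoSidedPow (N : Submodule F R) (l : ℕ) : Submodule F R :=
  ⨆ p ∈ Finset.HasAntidiagonal.antidiagonal l, N ^ p.1 * ⊤ * N ^ p.2

variable {N X : Submodule F R} {x t : R} {k l : ℕ}

lemma mul_mem_twoSidedPow_succ (ht : t ∈ N) (hx : x ∈ twoSidedPow N l) :
    t * x ∈ twoSidedPow N (l + 1) := by
  suffices N * twoSidedPow N l ≤ twoSidedPow N (l + 1) from this (Submodule.mul_mem_mul ht hx)
  simp only [twoSidedPow, Submodule.mul_iSup]
  refine iSup₂_le fun p hp ↦ le_iSup₂_of_le (p.1 + 1, p.2) ?_ ?_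
  · simp only [Finset.HasAntidiagonal.mem_antidiagonal] at hp ⊢
    omega
  · simp only [pow_succ', mul_assoc, le_refl]

lemma mem_twoSidedPow_succ_mul (ht : t ∈ N) (hx : x ∈ twoSidedPow N l) :
    x * t ∈ twoSidedPow N (l + 1) := by
  suffices twoSidedPow N l * N ≤ twoSidedPow N (l + 1) from this (Submodule.mul_mem_mul hx ht)
  simp only [twoSidedPow, Submodule.iSup_mul]
  refine iSup₂_le fun p hp ↦ le_iSup₂_of_le (p.1, p.2 + 1) ?_ ?_
  · simp only [Finset.HasAntidiagonal.mem_antidiagonal] at hp ⊢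
    omega
  · simp only [pow_succ, mul_assoc, le_refl]

lemma twoSidedPow_eq_bot (hk : N ^ k = ⊥) : twoSidedPow N (2 * k) = ⊥ := by
  simp only [twoSidedPow, iSup_eq_bot, Finset.HasAntidiagonal.mem_antidiagonal]
  intro p hp
  rcases le_or_gt k p.1 with h | h
  · rw [pow_eq_zero_of_le h hk, zero_mul, zero_mul, Submodule.zero_eq_bot]
  · rw [pow_eq_zero_of_le (by omega : k ≤ p.2) hk, mul_zero, Submodule.zero_eq_bot]

lemma mul_iSup_pow_le (hNX : N * X ≤ X * N ⊔ N) : N * (⨆ i : ℕ, X ^ i) ≤ (⨆ i : ℕ, X ^ i) * N := by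
  rw [Submodule.mul_iSup]
  refine iSup_le fun i ↦ ?_
  induction i with
  | zero => simpa using mul_le_mul_left (le_iSup (fun i : ℕ ↦ X ^ i) 0) N
  | succ i ih =>
    have hUX : (⨆ i : ℕ, X ^ i) * X ≤ ⨆ i : ℕ, X ^ i := by
      rw [Submodule.iSup_mul]
      exact iSup_le fun i ↦ le_iSup_of_le (i + 1) (pow_succ X i).ge
    calc N * X ^ (i + 1) = N * X ^ i * X := by rw [pow_succ, mul_assoc]
      _ ≤ (⨆ i : ℕ, X ^ i) * (N * X) := by rw [← mul_assoc]; exact mul_le_mul_left ih X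
      _ ≤ (⨆ i : ℕ, X ^ i) * (X * N ⊔ N) := mul_le_mul_right hNX _
      _ ≤ (⨆ i : ℕ, X ^ i) * N := by
        rw [Submodule.mul_sup, ← mul_assoc]
        exact sup_le (mul_le_mul_left hUX N) le_rfl

lemma sup_pow_mul_le {K : ℕ → Submodule F R} (hNK : ∀ j, N * K j ≤ K (j + 1))
    (hXK : ∀ j, X * K j ≤ K j) (hK : ∀ j, K (j + 1) ≤ K j) (i j : ℕ) :
    (N ⊔ X) ^ i * K j ≤ X ^ i * K j ⊔ K (j + 1) := by
  have hXpow (i : ℕ) : X ^ i * K j ≤ K j := by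
    induction i with
    | zero => simp
    | succ i ih =>
      rw [pow_succ', mul_assoc]
      exact (mul_le_mul_right ih X).trans (hXK j)
  induction i with
  | zero => simp
  | succ i ih =>
    calc (N ⊔ X) ^ (i + 1) * K j = (N ⊔ X) * ((N ⊔ X) ^ i * K j) := by rw [pow_succ', mul_assoc]
      _ ≤ (N ⊔ X) * (X ^ i * K j ⊔ K (j + 1)) := mul_le_mul_right ih _
      _ = N * (X ^ i * K j) ⊔ N * K (j + 1) ⊔ (X ^ (i + 1) * K j ⊔ X * K (j + 1)) := by
        rw [Submodule.sup_mul, Submodule.mul_sup, Submodule.mul_sup, pow_succ', mul_assoc X]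
      _ ≤ K (j + 1) ⊔ K (j + 1) ⊔ (X ^ (i + 1) * K j ⊔ K (j + 1)) := by
        gcongr
        · exact (mul_le_mul_right (hXpow i) N).trans (hNK j)
        · exact (hNK _).trans (hK _)
        · exact hXK _
      _ = X ^ (i + 1) * K j ⊔ K (j + 1) := by rw [sup_idem, sup_left_comm, sup_idem]

lemma isNilpotent_sup (hN : IsNilpotent N) (hX : IsNilpotent X) (hNX : N * X ≤ X * N ⊔ N) :
    IsNilpotent (N ⊔ X) := by
  obtain ⟨k, hk⟩ := hN
  obtain ⟨l, hl⟩ := hX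
  let U : Submodule F R := ⨆ i : ℕ, X ^ i
  let K (j : ℕ) : Submodule F R := U * (N ^ j * ⊤)
  have hXU : X * U ≤ U := by
    rw [Submodule.mul_iSup]
    exact iSup_le fun i ↦ le_iSup_of_le (i + 1) (pow_succ' X i).ge
  have hNK (j : ℕ) : N * K j ≤ K (j + 1) := by
    calc N * K j = N * U * (N ^ j * ⊤) := (mul_assoc _ _ _).symm
      _ ≤ U * N * (N ^ j * ⊤) := mul_le_mul_left (mul_iSup_pow_le hNX) _
      _ = K (j + 1) := by simp only [K, pow_succ', mul_assoc]
  have hXK (j : ℕ) : X * K j ≤ K j :=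
    (mul_assoc X U _).ge.trans (mul_le_mul_left hXU _)
  have hK (j : ℕ) : K (j + 1) ≤ K j := by
    simp only [K, pow_succ, mul_assoc]
    gcongr
    exact le_top
  have hstep (j : ℕ) : ((N ⊔ X) ^ l) ^ j * K 0 ≤ K j := by
    induction j with
    | zero => simp
    | succ j ih =>
      rw [pow_succ', mul_assoc]
      refine (mul_le_mul_right ih _).trans ((sup_pow_mul_le hNK hXK hK l j).trans ?_)
      simp [hl]
  have hone : (1 : Submodule F R) ≤ K 0 := by
    simpa [K] using mul_le_mul' (le_iSup (fun i : ℕ ↦ X ^ i) 0) (le_top : (1 : Submodule F R) ≤ ⊤)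
  refine ⟨l * k, le_bot_iff.mp ?_⟩
  calc (N ⊔ X) ^ (l * k) = ((N ⊔ X) ^ l) ^ k * 1 := by rw [pow_mul, mul_one]
    _ ≤ ((N ⊔ X) ^ l) ^ k * K 0 := mul_le_mul_right hone _
    _ ≤ K k := hstep k
    _ = ⊥ := by simp [K, hk]

variable {S T : Set R}

lemma exists_normalizing_of_not_subset (hT : IsNilpotent (Submodule.span F T)) (hTS : T ⊆ S)
    (hS : ∀ x ∈ S, ∀ y ∈ S, ∃ γ : F, x * y + γ • (y * x) ∈ S)
    (hST : ¬ S ⊆ Submodule.span F T) :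
    ∃ x ∈ S, x ∉ Submodule.span F T ∧
      ∀ t ∈ T, ∃ γ : F, t * x + γ • (x * t) ∈ Submodule.span F T := by
  by_contra! hcon
  obtain ⟨k, hk⟩ := hT
  have hwords (l : ℕ) :
      ∃ x ∈ S, x ∉ Submodule.span F T ∧ x ∈ twoSidedPow (Submodule.span F T) l := by
    induction l with
    | zero =>
      obtain ⟨x, hxS, hxT⟩ := Set.not_subset.mp hST
      exact ⟨x, hxS, hxT, by simp [twoSidedPow]⟩
    | succ l ih =>
      obtain ⟨x, hxS, hxT, hxl⟩ := ih
      obtain ⟨t, ht, htx⟩ := hcon x hxS hxT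
      obtain ⟨γ, hγ⟩ := hS t (hTS ht) x hxS
      have htN : t ∈ Submodule.span F T := Submodule.subset_span ht
      exact ⟨_, hγ, htx γ, add_mem (mul_mem_twoSidedPow_succ htN hxl)
        (Submodule.smul_mem _ γ (mem_twoSidedPow_succ_mul htN hxl))⟩
  obtain ⟨x, -, hxT, hx⟩ := hwords (2 * k)
  rw [twoSidedPow_eq_bot hk, Submodule.mem_bot] at hx
  exact hxT (hx ▸ zero_mem _)

lemma isNilpotent_span_insert (hT : IsNilpotent (Submodule.span F T)) (hx : IsNilpotent x)
    (hTx : ∀ t ∈ T, ∃ γ : F, t * x + γ • (x * t) ∈ Submodule.span F T) :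
    IsNilpotent (Submodule.span F (insert x T)) := by
  rw [Submodule.span_insert, sup_comm]
  refine isNilpotent_sup hT ?_ ?_
  · obtain ⟨l, hl⟩ := hx
    exact ⟨l, by rw [Submodule.span_pow, Set.singleton_pow, hl, Submodule.span_zero_singleton,
      Submodule.zero_eq_bot]⟩
  · have hxX : x ∈ Submodule.span F {x} := Submodule.mem_span_singleton_self x
    rw [Submodule.span_mul_span, Submodule.span_le]
    rintro _ ⟨t, ht, _, rfl, rfl⟩
    obtain ⟨γ, hγ⟩ := hTx t ht
    have hxt := Submodule.mul_mem_mul hxX (Submodule.subset_span (R := F) ht)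
    exact (Submodule.add_mem_iff_left _ (Submodule.mem_sup_left (Submodule.smul_mem _ γ hxt))).mp
      (Submodule.mem_sup_right hγ)

/-- Jacobson's theorem on weakly closed sets of nilpotent elements. -/
theorem isNilpotent_span_of_weaklyClosed [FiniteDimensional F R]
    (hS : ∀ x ∈ S, ∀ y ∈ S, ∃ γ : F, x * y + γ • (y * x) ∈ S) (hnil : ∀ x ∈ S, IsNilpotent x) :
    IsNilpotent (Submodule.span F S) := by
  obtain ⟨_, ⟨T, hTS, hT, rfl⟩, hmax⟩ := WellFounded.has_min
    (wellFounded_gt (α := Submodule F R))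
    {N | ∃ T ⊆ S, IsNilpotent (Submodule.span F T) ∧ N = Submodule.span F T}
    ⟨⊥, ∅, Set.empty_subset S, ⟨1, by simp⟩, by simp⟩
  suffices S ⊆ Submodule.span F T by
    rwa [le_antisymm (Submodule.span_le.mpr this) (Submodule.span_mono hTS)]
  by_contra hST
  obtain ⟨x, hxS, hxT, hx⟩ := exists_normalizing_of_not_subset hT hTS hS hST
  refine hmax _ ⟨insert x T, Set.insert_subset hxS hTS,
    isNilpotent_span_insert hT (hnil x hxS) hx, rfl⟩ ?_
  refine lt_of_le_of_ne (Submodule.span_mono (Set.subset_insert x T)) fun heq ↦ hxT ?_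
  rw [heq]
  exact Submodule.subset_span (Set.mem_insert x T)

end WeaklyClosed

section Simple

variable {F R : Type*} [Field F] [Ring R] [Algebra F R]

/-- Simplicity of a special Jordan algebra, expressed with the anticommutator `xy + yx` in place of
the Jordan product. -/
structure IsJordanSimple (A : Submodule F R) : Prop where
  closed : IsJordanClosed A
  exists_ne_zero : ∃ x ∈ A, ∃ y ∈ A, x * y + y * x ≠ 0
  eq_bot_or_eq : ∀ I ≤ A, (∀ x ∈ A, ∀ y ∈ I, x * y + y * x ∈ I) → I = ⊥ ∨ I = A

/-- Nondegeneracy of a special Jordan algebra: no nonzero `z ∈ A` satisfies `z A z = 0`. -/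
def IsNondegenerate (A : Submodule F R) : Prop :=
  ∀ ⦃z⦄, z ∈ A → (∀ a ∈ A, z * a * z = 0) → z = 0

variable {A : Submodule F R}

lemma IsJordanSimple.le_mul_self (hA : IsJordanSimple A) : A ≤ A * A := by
  obtain ⟨x, hx, y, hy, hxy⟩ := hA.exists_ne_zero
  have hmem {x y : R} (hx : x ∈ A) (hy : y ∈ A) : x * y + y * x ∈ A ⊓ A * A :=
    ⟨hA.closed hx hy, add_mem (Submodule.mul_mem_mul hx hy) (Submodule.mul_mem_mul hy hx)⟩
  rcases hA.eq_bot_or_eq (A ⊓ A * A) inf_le_left fun a ha b hb ↦ hmem ha hb.1 with h | h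
  · exact absurd ((Submodule.mem_bot F).mp (h ▸ hmem hx hy)) hxy
  · exact inf_eq_left.mp h

lemma IsJordanSimple.not_isNilpotent (hA : IsJordanSimple A) : ¬ IsNilpotent A := by
  rintro ⟨k, hk⟩
  have hpow (k : ℕ) : A ≤ A ^ (k + 1) := by
    induction k with
    | zero => simp
    | succ k ih => exact hA.le_mul_self.trans (pow_succ A (k + 1) ▸ mul_le_mul_left ih A)
  obtain ⟨x, hx, y, -, hxy⟩ := hA.exists_ne_zero
  have hx0 : x ∈ A ^ (k + 1) := hpow k hx
  rw [pow_succ, hk, zero_mul, Submodule.zero_eq_bot, Submodule.mem_bot] at hx0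
  exact hxy (by simp [hx0])

lemma exists_mem_absoluteZeroDivisors_of_not_isNondegenerate [NeZero (2 : F)]
    (hA : IsJordanClosed A) (hdeg : ¬ IsNondegenerate A) :
    ∃ z ∈ absoluteZeroDivisors A, z ≠ 0 := by
  simp only [IsNondegenerate, not_forall] at hdeg
  obtain ⟨z, hz, hzA, hz0⟩ := hdeg
  by_cases hzz : z * z = 0
  · exact ⟨z, ⟨hz, hzz, hzA⟩, hz0⟩
  · refine ⟨z * z, ⟨hA.mul_self_mem hz, ?_, fun a ha ↦ ?_⟩, hzz⟩
    · rw [← mul_assoc, hzA z hz, zero_mul]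
    · calc z * z * a * (z * z) = z * (z * a * z) * z := by noncomm_ring
        _ = 0 := by simp [hzA a ha]

theorem IsJordanSimple.isNondegenerate [NeZero (2 : F)] [FiniteDimensional F R]
    (hA : IsJordanSimple A) : IsNondegenerate A := by
  by_contra hdeg
  obtain ⟨z, hz, hz0⟩ := exists_mem_absoluteZeroDivisors_of_not_isNondegenerate hA.closed hdeg
  have hspan : Submodule.span F (absoluteZeroDivisors A) = A := by
    refine (hA.eq_bot_or_eq _ (Submodule.span_le.mpr fun z hz ↦ hz.1)
      fun x hx y hy ↦ anticommutator_mem_span_absoluteZeroDivisors hA.closed hx hy).resolve_left ?_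
    exact fun h ↦ hz0 ((Submodule.mem_bot F).mp (h ▸ Submodule.subset_span hz))
  refine hA.not_isNilpotent (hspan ▸ isNilpotent_span_of_weaklyClosed (fun x hx y hy ↦ ⟨1, ?_⟩)
    fun x hx ↦ ⟨2, by rw [pow_two, hx.2.1]⟩)
  rw [one_smul]
  exact anticommutator_mem_absoluteZeroDivisors hA.closed hx hy

lemma IsSimpleJordan.isJordanSimple [NeZero (2 : F)] {n : ℕ}
    {A : Submodule F (Matrix (Fin n) (Fin n) F)} (hA : IsSimpleJordan F A)
    (hclosed : ∀ x ∈ A, ∀ y ∈ A, jp x y ∈ A) : IsJordanSimple A where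
  closed x hx y hy := (A.smul_mem_iff (inv_ne_zero two_ne_zero)).mp (hclosed x hx y hy)
  exists_ne_zero := by
    obtain ⟨x, hx, y, hy, hxy⟩ := hA.1
    exact ⟨x, hx, y, hy, fun h ↦ hxy (by rw [jp, h, smul_zero])⟩
  eq_bot_or_eq I hI hideal := hA.2 I hI fun x hx y hy ↦ I.smul_mem _ (hideal x hx y hy)

end Simple

section Primitive

variable {F R : Type*} [Field F] [Ring R] [Algebra F R]

/-- Absolutely primitive idempotents of `A`: nonzero idempotents `e ∈ A` with `e A e = F e`. -/
structure IsAbsPrimitive (A : Submodule F R) (e : R) : Prop where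
  mem : e ∈ A
  ne_zero : e ≠ 0
  idem : IsIdempotentElem e
  exists_smul : ∀ a ∈ A, ∃ c : F, e * a * e = c • e

variable {A : Submodule F R} {a : R}

lemma isAbsPrimitive_inv_smul {ν : F} (ha : a ∈ A) (ha0 : a ≠ 0) (hν : ν ≠ 0)
    (haa : a * a = ν • a) (haA : ∀ x ∈ A, ∃ c : F, a * x * a = c • a) :
    IsAbsPrimitive A (ν⁻¹ • a) where
  mem := A.smul_mem _ ha
  ne_zero := smul_ne_zero (inv_ne_zero hν) ha0
  idem := by
    rw [IsIdempotentElem, smul_mul_smul_comm, haa, smul_smul, mul_assoc, inv_mul_cancel₀ hν,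
      mul_one]
  exists_smul x hx := by
    obtain ⟨c, hc⟩ := haA x hx
    refine ⟨ν⁻¹ * c, ?_⟩
    simp only [smul_mul_assoc, mul_smul_comm, hc, smul_smul]
    congr 1
    ring

lemma exists_eigenvector_mul [IsAlgClosed F] [FiniteDimensional F R] (ha : a ≠ 0) (b : R) :
    ∃ (c : F) (u : R), a * u ≠ 0 ∧ a * b * (a * u) = c • (a * u) := by
  let V := LinearMap.range (LinearMap.mulLeft F a)
  have hV : ∀ w ∈ V, LinearMap.mulLeft F (a * b) w ∈ V := fun w _ ↦ ⟨b * w, by simp⟩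
  have : Nontrivial V :=
    Submodule.nontrivial_iff_ne_bot.mpr fun h ↦ ha <| by
      simpa using LinearMap.congr_fun (LinearMap.range_eq_bot.mp h) 1
  obtain ⟨c, hc⟩ := Module.End.exists_eigenvalue ((LinearMap.mulLeft F (a * b)).restrict hV)
  obtain ⟨⟨_, u, rfl⟩, hu⟩ := hc.exists_hasEigenvector
  exact ⟨c, u, fun h ↦ hu.2 (Subtype.ext h), congrArg Subtype.val hu.apply_eq_smul⟩

-- Take `a` such that left multiplication by `a` has a maximal kernel: if `c` is an eigenvalue of
-- `a b` on the range of `a`, then the kernel of `a b a - c a` is strictly larger.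
lemma exists_minimal_element [IsAlgClosed F] [FiniteDimensional F R] (hA : A ≠ ⊥) :
    ∃ a ∈ A, a ≠ 0 ∧ ∀ b, a * b * a ∈ A → ∃ c : F, a * b * a = c • a := by
  obtain ⟨a₀, ha₀, ha₀0⟩ := Submodule.exists_mem_ne_zero_of_ne_bot hA
  obtain ⟨_, ⟨a, ha, ha0, rfl⟩, hmax⟩ := WellFounded.has_min (wellFounded_gt (α := Submodule F R))
    {W | ∃ a ∈ A, a ≠ 0 ∧ W = LinearMap.ker (LinearMap.mulLeft F a)} ⟨_, a₀, ha₀, ha₀0, rfl⟩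
  refine ⟨a, ha, ha0, fun b hb ↦ ?_⟩
  obtain ⟨c, u, hu, hcu⟩ := exists_eigenvector_mul (F := F) ha0 b
  refine ⟨c, ?_⟩
  by_contra hne
  refine hmax _ ⟨a * b * a - c • a, A.sub_mem hb (A.smul_mem c ha), sub_ne_zero.mpr hne, rfl⟩ ?_
  refine SetLike.lt_iff_le_and_exists.mpr ⟨fun v hv ↦ ?_, u, ?_, hu⟩
  · have hav : a * v = 0 := hv
    simp [sub_mul, mul_assoc, hav]
  · simp [sub_mul, ← hcu, mul_assoc]

lemma exists_mem_mul_mul_eq_self (hnd : IsNondegenerate A) (ha : a ∈ A) (ha0 : a ≠ 0)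
    (haA : ∀ x ∈ A, ∃ c : F, a * x * a = c • a) : ∃ b ∈ A, a * b * a = a := by
  obtain ⟨b, hb, hab⟩ : ∃ b ∈ A, a * b * a ≠ 0 := by
    by_contra! h
    exact ha0 (hnd ha h)
  obtain ⟨c, hc⟩ := haA b hb
  have hc0 : c ≠ 0 := by
    rintro rfl
    exact hab (by rw [hc, zero_smul])
  exact ⟨c⁻¹ • b, A.smul_mem _ hb, by simp [hc, smul_smul, hc0]⟩

variable [NeZero (2 : F)]

lemma exists_mem_mul_add_mul_eq_smul {b : R} {μ : F} (hb : b ∈ A) (hab : a * b * a = a)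
    (hμ : a * (b * b) * a = μ • a) :
    ∃ d ∈ A, a * d * a * d * a = a ∧ ∃ ν : F, ν ≠ 0 ∧ a * (d + d + d * d) * a = ν • a := by
  have hexpand (d : R) : a * (d + d + d * d) * a = a * d * a + a * d * a + a * (d * d) * a := by
    noncomm_ring
  by_cases h : 2 + μ = 0
  · refine ⟨-b, A.neg_mem hb, by simp [hab], -2 + μ, fun h' ↦ ?_, ?_⟩
    · have : (2 : F) * 2 = 0 := by linear_combination h - h'
      simp [two_ne_zero] at this
    · rw [hexpand, neg_mul_neg, hμ, mul_neg, neg_mul, hab]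
      module
  · refine ⟨b, hb, by rw [hab, hab], 2 + μ, h, ?_⟩
    rw [hexpand, hμ, hab]
    module

lemma exists_isAbsPrimitive_of_mul_self_eq_zero (hA : IsJordanClosed A) (hnd : IsNondegenerate A)
    (ha : a ∈ A) (ha0 : a ≠ 0) (haa : a * a = 0)
    (haA : ∀ x ∈ A, ∃ c : F, a * x * a = c • a) : ∃ e, IsAbsPrimitive A e := by
  obtain ⟨b, hb, hab⟩ := exists_mem_mul_mul_eq_self hnd ha ha0 haA
  obtain ⟨μ, hμ⟩ := haA (b * b) (hA.mul_self_mem hb)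
  obtain ⟨d, hd, had, ν, hν, hadd⟩ := exists_mem_mul_add_mul_eq_smul hb hab hμ
  let g := (1 + d) * a * (1 + d)
  have hgg : g * g = ν • g := by
    calc g * g = (1 + d) * (a * a + a * (d + d + d * d) * a) * (1 + d) := by
          simp only [g]; noncomm_ring
      _ = ν • g := by simp [haa, hadd, g]
  have haga : a * g * a = a := by
    calc a * g * a = a * a * a + a * a * d * a + a * d * (a * a) + a * d * a * d * a := by
          simp only [g]; noncomm_ring
      _ = a := by simp [haa, had]
  have hg0 : g ≠ 0 := fun h ↦ ha0 (by rw [← haga, h]; simp)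
  refine ⟨_, isAbsPrimitive_inv_smul (hA.one_add_mul_mul_one_add_mem hd ha) hg0 hν hgg ?_⟩
  intro x hx
  obtain ⟨c, hc⟩ := haA _ (hA.one_add_mul_mul_one_add_mem hd hx)
  refine ⟨c, ?_⟩
  calc g * x * g = (1 + d) * (a * ((1 + d) * x * (1 + d)) * a) * (1 + d) := by
        simp only [g]; noncomm_ring
    _ = c • g := by simp [hc, g]

theorem exists_isAbsPrimitive [IsAlgClosed F] [FiniteDimensional F R] (hA : IsJordanClosed A)
    (hnd : IsNondegenerate A) (hbot : A ≠ ⊥) : ∃ e, IsAbsPrimitive A e := by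
  obtain ⟨a, ha, ha0, hmin⟩ := exists_minimal_element hbot
  have haA (x : R) (hx : x ∈ A) : ∃ c : F, a * x * a = c • a := hmin x (hA.mul_mul_self_mem ha hx)
  obtain ⟨ν, hν⟩ := hmin 1 (by simpa using hA.mul_self_mem ha)
  rw [mul_one] at hν
  rcases eq_or_ne ν 0 with rfl | hν0
  · exact exists_isAbsPrimitive_of_mul_self_eq_zero hA hnd ha ha0 (by simpa using hν) haA
  · exact ⟨_, isAbsPrimitive_inv_smul ha ha0 hν0 hν haA⟩

end Primitive

section Peirce

variable {F R : Type*} [Field F] [Ring R] [Algebra F R]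

/-- The Peirce zero space of an idempotent `e`: the elements of `A` annihilated by `e` on both
sides. -/
def peirceZero (A : Submodule F R) (e : R) : Submodule F R :=
  A ⊓ (LinearMap.ker (LinearMap.mulLeft F e) ⊓ LinearMap.ker (LinearMap.mulRight F e))

variable {A : Submodule F R} {a e f g x z : R}

lemma mem_peirceZero : x ∈ peirceZero A e ↔ x ∈ A ∧ e * x = 0 ∧ x * e = 0 :=
  Iff.rfl

lemma peirceZero_lt (he : IsAbsPrimitive A e) : peirceZero A e < A :=
  SetLike.lt_iff_le_and_exists.mpr
    ⟨inf_le_left, e, he.mem, fun h ↦ he.ne_zero (he.idem ▸ (mem_peirceZero.mp h).2.1)⟩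

lemma IsJordanClosed.one_sub_mul_mul_one_sub_mem_peirceZero [NeZero (2 : F)]
    (hA : IsJordanClosed A) (he : e ∈ A) (hee : IsIdempotentElem e) (ha : a ∈ A) :
    (1 - e) * a * (1 - e) ∈ peirceZero A e := by
  refine mem_peirceZero.mpr ⟨?_, ?_, ?_⟩
  · simpa only [sub_eq_add_neg] using hA.one_add_mul_mul_one_add_mem (A.neg_mem he) ha
  · rw [← mul_assoc, ← mul_assoc, hee.mul_one_sub_self, zero_mul, zero_mul]
  · rw [mul_assoc, hee.one_sub_mul_self, mul_zero]

lemma mul_one_sub_mul_one_sub_mul_of_mem_peirceZero (hz : z ∈ peirceZero A e) (a : R) :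
    z * ((1 - e) * a * (1 - e)) * z = z * a * z := by
  obtain ⟨-, hez, hze⟩ := mem_peirceZero.mp hz
  calc z * ((1 - e) * a * (1 - e)) * z = (z - z * e) * a * (z - e * z) := by noncomm_ring
    _ = z * a * z := by rw [hez, hze, sub_zero]

lemma IsJordanClosed.peirceZero (hA : IsJordanClosed A) (e : R) :
    IsJordanClosed (peirceZero A e) := by
  intro x hx y hy
  obtain ⟨hxA, hex, hxe⟩ := mem_peirceZero.mp hx
  obtain ⟨hyA, hey, hye⟩ := mem_peirceZero.mp hy
  refine mem_peirceZero.mpr ⟨hA hxA hyA, ?_, ?_⟩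
  · rw [mul_add, ← mul_assoc, ← mul_assoc, hex, hey, zero_mul, zero_mul, add_zero]
  · rw [add_mul, mul_assoc, mul_assoc, hxe, hye, mul_zero, mul_zero, add_zero]

/-- A frame: a maximal family of pairwise orthogonal absolutely primitive idempotents of `A`. -/
structure IsFrame {ι : Type*} (A : Submodule F R) (e : ι → R) : Prop where
  prim : ∀ i, IsAbsPrimitive A (e i)
  ortho : Pairwise fun i j ↦ e i * e j = 0
  maximal : ∀ a ∈ A, (∀ i, e i * a = 0 ∧ a * e i = 0) → a = 0

lemma IsFrame.orthogonalIdempotents {ι : Type*} {e : ι → R} (he : IsFrame A e) :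
    OrthogonalIdempotents e :=
  ⟨fun i ↦ (he.prim i).idem, he.ortho⟩

lemma IsFrame.sum_mem {ι : Type*} [Fintype ι] {e : ι → R} (he : IsFrame A e) :
    ∑ i, e i ∈ A :=
  A.sum_mem fun i _ ↦ (he.prim i).mem

variable [NeZero (2 : F)]

lemma IsNondegenerate.peirceZero (hA : IsJordanClosed A) (hnd : IsNondegenerate A) (he : e ∈ A)
    (hee : IsIdempotentElem e) : IsNondegenerate (peirceZero A e) := by
  intro z hz hzA
  refine hnd (mem_peirceZero.mp hz).1 fun a ha ↦ ?_
  rw [← mul_one_sub_mul_one_sub_mul_of_mem_peirceZero hz]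
  exact hzA _ (hA.one_sub_mul_mul_one_sub_mem_peirceZero he hee ha)

lemma IsAbsPrimitive.of_peirceZero (hA : IsJordanClosed A) (he : e ∈ A)
    (hee : IsIdempotentElem e) (hf : IsAbsPrimitive (HFn.peirceZero A e) f) :
    IsAbsPrimitive A f where
  mem := (mem_peirceZero.mp hf.mem).1
  ne_zero := hf.ne_zero
  idem := hf.idem
  exists_smul a ha := by
    rw [← mul_one_sub_mul_one_sub_mul_of_mem_peirceZero hf.mem]
    exact hf.exists_smul _ (hA.one_sub_mul_mul_one_sub_mem_peirceZero he hee ha)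

lemma IsFrame.cons {m : ℕ} {e₀ : R} {e : Fin m → R} (hA : IsJordanClosed A)
    (he₀ : IsAbsPrimitive A e₀) (he : IsFrame (peirceZero A e₀) e) :
    IsFrame A (Fin.cons e₀ e : Fin (m + 1) → R) where
  prim := Fin.forall_fin_succ.mpr ⟨he₀, fun i ↦ (he.prim i).of_peirceZero hA he₀.mem he₀.idem⟩
  ortho := by
    have horth (i : Fin m) := (mem_peirceZero.mp (he.prim i).mem).2
    intro i j
    refine Fin.cases ?_ (fun i ↦ ?_) i <;> refine Fin.cases ?_ (fun j ↦ ?_) j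
    · exact fun h ↦ absurd rfl h
    · exact fun _ ↦ (horth j).1
    · exact fun _ ↦ (horth i).2
    · exact fun hij ↦ he.ortho fun h ↦ hij (congrArg Fin.succ h)
  maximal a ha h := he.maximal a (mem_peirceZero.mpr ⟨ha, h 0⟩) fun i ↦ h i.succ

theorem exists_isFrame [IsAlgClosed F] [FiniteDimensional F R] (hA : IsJordanClosed A)
    (hnd : IsNondegenerate A) : ∃ (m : ℕ) (e : Fin m → R), IsFrame A e := by
  induction A using WellFoundedLT.induction with
  | ind A ih =>
    by_cases hbot : A = ⊥
    · exact ⟨0, Fin.elim0, fun i ↦ i.elim0, fun i ↦ i.elim0, fun a ha _ ↦ by simpa [hbot] using ha⟩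
    obtain ⟨e₀, he₀⟩ := exists_isAbsPrimitive hA hnd hbot
    obtain ⟨m, e, he⟩ := ih _ (peirceZero_lt he₀) (hA.peirceZero e₀)
      (hnd.peirceZero hA he₀.mem he₀.idem)
    exact ⟨m + 1, _, he.cons hA he₀⟩

lemma corner_mul_corner_eq_zero (hA : IsJordanClosed A) (hnd : IsNondegenerate A) (hf : f ∈ A)
    (hfg : f + g = 1) (hg : ∀ c ∈ A, g * c * g = 0) (ha : a ∈ A) : f * a * g * a * f = 0 := by
  refine hnd ?_ fun b hb ↦ ?_
  · obtain rfl := eq_sub_of_add_eq' hfg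
    convert A.sub_mem (hA.mul_mul_self_mem hf (hA.mul_self_mem ha))
      (hA.mul_mul_self_mem hf (hA.mul_mul_self_mem ha hf)) using 1
    noncomm_ring
  · calc f * a * g * a * f * b * (f * a * g * a * f)
        = f * a * (g * (a * (f * b * f) * a) * g) * a * f := by noncomm_ring
      _ = 0 := by simp [hg _ (hA.mul_mul_self_mem ha (hA.mul_mul_self_mem hf hb))]

lemma corner_add_corner_eq_zero (hA : IsJordanClosed A) (hnd : IsNondegenerate A) (hf : f ∈ A)
    (hfg : f + g = 1) (hg : ∀ c ∈ A, g * c * g = 0) (ha : a ∈ A) : g * a * f + f * a * g = 0 := by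
  have hzero : f * a * g * a * f = 0 := corner_mul_corner_eq_zero hA hnd hf hfg hg ha
  have hswap {b c : R} (hb : b ∈ A) (hc : c ∈ A) : g * b * f * c * g = -(g * c * f * b * g) := by
    rw [eq_neg_iff_add_eq_zero, ← hg _ (hA.triple_mem hb hf hc)]
    noncomm_ring
  refine hnd ?_ fun b hb ↦ ?_
  · obtain rfl := eq_sub_of_add_eq' hfg
    have hfaf := hA.mul_mul_self_mem hf ha
    convert A.sub_mem (A.sub_mem (hA hf ha) hfaf) hfaf using 1
    noncomm_ring
  · have hleft : g * a * f * b * g * a * f = 0 := by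
      calc g * a * f * b * g * a * f = -(g * b * (f * a * g * a * f)) := by
            rw [hswap ha hb]; noncomm_ring
        _ = 0 := by simp [hzero]
    have hright : f * a * (g * b * f * a * g) = 0 := by
      calc f * a * (g * b * f * a * g) = -(f * a * g * a * f * b * g) := by
            rw [hswap hb ha]; noncomm_ring
        _ = 0 := by simp [hzero]
    calc (g * a * f + f * a * g) * b * (g * a * f + f * a * g)
        = g * a * f * b * g * a * f + g * (a * (f * b * f) * a) * g + f * a * (g * b * g) * a * f
          + f * a * (g * b * f * a * g) := by noncomm_ring
      _ = 0 := by
          rw [hg _ (hA.mul_mul_self_mem ha (hA.mul_mul_self_mem hf hb)), hg b hb, hleft, hright]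
          simp

lemma mul_eq_self_of_peirceZero_eq_bot (hA : IsJordanClosed A) (hnd : IsNondegenerate A)
    (hf : f ∈ A) (hff : IsIdempotentElem f) (h0 : peirceZero A f = ⊥) (ha : a ∈ A) :
    f * a = a ∧ a * f = a := by
  have hg (c : R) (hc : c ∈ A) : (1 - f) * c * (1 - f) = 0 :=
    (Submodule.mem_bot F).mp (h0 ▸ hA.one_sub_mul_mul_one_sub_mem_peirceZero hf hff hc)
  have hsum := corner_add_corner_eq_zero hA hnd hf (add_sub_cancel f 1) hg ha
  have hleft : (1 - f) * a * f = 0 := by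
    calc (1 - f) * a * f = (1 - f) * ((1 - f) * a * f + f * a * (1 - f)) := by
          rw [mul_add, ← mul_assoc, ← mul_assoc, hff.one_sub.eq, ← mul_assoc, ← mul_assoc,
            hff.one_sub_mul_self]
          simp
      _ = 0 := by rw [hsum, mul_zero]
  have hright : f * a * (1 - f) = 0 := by rwa [hleft, zero_add] at hsum
  constructor
  · calc f * a = a - (1 - f) * a * f - (1 - f) * a * (1 - f) := by noncomm_ring
      _ = a := by rw [hleft, hg a ha, sub_zero, sub_zero]
  · calc a * f = a - f * a * (1 - f) - (1 - f) * a * (1 - f) := by noncomm_ring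
      _ = a := by rw [hright, hg a ha, sub_zero, sub_zero]

variable {ι : Type*} [Fintype ι] {e : ι → R}

lemma IsFrame.sum_mul_eq_self_and_mul_sum_eq_self (hA : IsJordanClosed A) (hnd : IsNondegenerate A)
    (he : IsFrame A e) (ha : a ∈ A) : (∑ i, e i) * a = a ∧ a * (∑ i, e i) = a := by
  classical
  have horth := he.orthogonalIdempotents
  refine mul_eq_self_of_peirceZero_eq_bot hA hnd he.sum_mem horth.isIdempotentElem_sum
    (eq_bot_iff.mpr fun x hx ↦ (Submodule.mem_bot F).mpr ?_) ha
  obtain ⟨hxA, hsx, hxs⟩ := mem_peirceZero.mp hx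
  refine he.maximal x hxA fun i ↦ ⟨?_, ?_⟩
  · rw [← horth.mul_sum_of_mem (Finset.mem_univ i), mul_assoc, hsx, mul_zero]
  · have hsum_mul : (∑ j, e j) * e i = e i := by simp [Finset.sum_mul, horth.mul_eq]
    rw [← hsum_mul, ← mul_assoc, hxs, zero_mul]

end Peirce

section PeirceBlock

variable {F R : Type*} [Field F] [Ring R] [Algebra F R]

/-- The Peirce block `e A f` of `A` with respect to two idempotents `e` and `f`. -/
def peirceBlock (A : Submodule F R) (e f : R) : Submodule F R :=
  A.map (LinearMap.mulLeft F e ∘ₗ LinearMap.mulRight F f)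

variable {A : Submodule F R} {a e f y : R}

lemma mem_peirceBlock : y ∈ peirceBlock A e f ↔ ∃ a ∈ A, e * a * f = y := by
  simp [peirceBlock, mul_assoc]

lemma mul_mul_mem_peirceBlock (ha : a ∈ A) : e * a * f ∈ peirceBlock A e f :=
  mem_peirceBlock.mpr ⟨a, ha, rfl⟩

lemma peirceBlock_left_mul (he : IsIdempotentElem e) (hy : y ∈ peirceBlock A e f) :
    e * y = y := by
  obtain ⟨a, -, rfl⟩ := mem_peirceBlock.mp hy
  rw [← mul_assoc, ← mul_assoc, he.eq]

lemma peirceBlock_mul_right (hf : IsIdempotentElem f) (hy : y ∈ peirceBlock A e f) :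
    y * f = y := by
  obtain ⟨a, -, rfl⟩ := mem_peirceBlock.mp hy
  rw [mul_assoc, hf.eq]

lemma IsAbsPrimitive.mem_peirceBlock (he : IsAbsPrimitive A e) : e ∈ peirceBlock A e e :=
  HFn.mem_peirceBlock.mpr ⟨e, he.mem, by rw [he.idem.eq, he.idem.eq]⟩

lemma IsAbsPrimitive.exists_smul_of_mem_peirceBlock (he : IsAbsPrimitive A e)
    (hy : y ∈ peirceBlock A e e) : ∃ c : F, y = c • e := by
  obtain ⟨a, ha, rfl⟩ := HFn.mem_peirceBlock.mp hy
  exact he.exists_smul a ha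

end PeirceBlock

section SymmetricPeirce

variable {F N : Type*} [Field F] [Fintype N] [DecidableEq N]

/-- `A` is a Jordan algebra of symmetric matrices. -/
structure IsSymmJordan (A : Submodule F (Matrix N N F)) : Prop where
  closed : IsJordanClosed A
  symm : ∀ a ∈ A, aᵀ = a

/-- `u` connects the idempotents `e` and `f`: it lies in the block `e A f` and is a partial
isometry from `f` to `e`. -/
structure IsConnecting (A : Submodule F (Matrix N N F)) (e f u : Matrix N N F) : Prop where
  mem : u ∈ peirceBlock A e f
  mul_transpose : u * uᵀ = e
  transpose_mul : uᵀ * u = f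

variable {A : Submodule F (Matrix N N F)} {b e f g u v y : Matrix N N F}

lemma IsSymmJordan.transpose_mul_mul (hA : IsSymmJordan A) (he : e ∈ A) (hf : f ∈ A) (hb : b ∈ A) :
    (e * b * f)ᵀ = f * b * e := by
  rw [transpose_mul, transpose_mul, hA.symm e he, hA.symm f hf, hA.symm b hb, mul_assoc]

lemma IsSymmJordan.transpose_mem_peirceBlock (hA : IsSymmJordan A) (he : e ∈ A) (hf : f ∈ A)
    (hy : y ∈ peirceBlock A e f) : yᵀ ∈ peirceBlock A f e := by
  obtain ⟨a, ha, rfl⟩ := mem_peirceBlock.mp hy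
  rw [hA.transpose_mul_mul he hf ha]
  exact mul_mul_mem_peirceBlock ha

lemma exists_mul_mul_transpose_eq_smul (hA : IsSymmJordan A) (he : e ∈ A)
    (hf : IsAbsPrimitive A f) (hy : y ∈ peirceBlock A e f) (hb : b ∈ A) :
    ∃ c : F, y * b * yᵀ = c • (y * yᵀ) := by
  obtain ⟨c, hc⟩ := hf.exists_smul b hb
  have hyf := peirceBlock_mul_right hf.idem hy
  have hfy := peirceBlock_left_mul hf.idem (hA.transpose_mem_peirceBlock he hf.mem hy)
  refine ⟨c, ?_⟩
  calc y * b * yᵀ = y * f * b * (f * yᵀ) := by rw [hyf, hfy]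
    _ = y * (f * b * f) * yᵀ := by noncomm_ring
    _ = c • (y * yᵀ) := by rw [hc, mul_smul_comm, hyf, smul_mul_assoc]

variable [NeZero (2 : F)]

lemma IsSymmJordan.add_transpose_mem (hA : IsSymmJordan A) (he : e ∈ A) (hf : f ∈ A)
    (hy : y ∈ peirceBlock A e f) : y + yᵀ ∈ A := by
  obtain ⟨a, ha, rfl⟩ := mem_peirceBlock.mp hy
  rw [hA.transpose_mul_mul he hf ha]
  exact hA.closed.triple_mem he ha hf

lemma mul_mem_peirceBlock (hA : IsSymmJordan A) (he : IsAbsPrimitive A e)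
    (hf : IsAbsPrimitive A f) (hg : IsAbsPrimitive A g) (hef : e * f = 0) (heg : e * g = 0)
    (hfg : f * g = 0) (hy : y ∈ peirceBlock A e f) (hv : v ∈ peirceBlock A f g) :
    y * v ∈ peirceBlock A e g := by
  have hey := peirceBlock_left_mul he.idem hy
  have hyf := peirceBlock_mul_right hf.idem hy
  have hfv := peirceBlock_left_mul hf.idem hv
  have hvg := peirceBlock_mul_right hg.idem hv
  have hfy :=
    peirceBlock_left_mul hf.idem (hA.transpose_mem_peirceBlock he.mem hf.mem hy)
  have hgv :=
    peirceBlock_left_mul hg.idem (hA.transpose_mem_peirceBlock hf.mem hg.mem hv)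
  have hev : e * v = 0 := by rw [← hfv, ← mul_assoc, hef, zero_mul]
  have hev' : e * vᵀ = 0 := by rw [← hgv, ← mul_assoc, heg, zero_mul]
  have hey' : e * yᵀ = 0 := by rw [← hfy, ← mul_assoc, hef, zero_mul]
  have hyv' : y * vᵀ = 0 := by rw [← hyf, ← hgv, mul_assoc, ← mul_assoc f, hfg, zero_mul, mul_zero]
  refine mem_peirceBlock.mpr ⟨_, hA.closed (hA.add_transpose_mem he.mem hf.mem hy)
    (hA.add_transpose_mem hf.mem hg.mem hv), ?_⟩
  calc e * ((y + yᵀ) * (v + vᵀ) + (v + vᵀ) * (y + yᵀ)) * g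
      = e * y * (v * g) + e * (y * vᵀ) * g + e * yᵀ * (v + vᵀ) * g
        + e * v * (y + yᵀ) * g + e * vᵀ * (y + yᵀ) * g := by noncomm_ring
    _ = y * v := by rw [hey, hvg, hev, hev', hey', hyv']; simp

lemma exists_mul_transpose_add_eq_smul (hA : IsSymmJordan A) (he : IsAbsPrimitive A e)
    (hf : f ∈ A) (hff : IsIdempotentElem f) (hy : y ∈ peirceBlock A e f)
    (hv : v ∈ peirceBlock A e f) : ∃ c : F, y * vᵀ + v * yᵀ = c • e := by
  obtain ⟨a, ha, rfl⟩ := mem_peirceBlock.mp hy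
  obtain ⟨b, hb, rfl⟩ := mem_peirceBlock.mp hv
  obtain ⟨c, hc⟩ := he.exists_smul _ (hA.closed.triple_mem ha hf hb)
  refine ⟨c, ?_⟩
  rw [hA.transpose_mul_mul he.mem hf ha, hA.transpose_mul_mul he.mem hf hb, ← hc]
  calc e * a * f * (f * b * e) + e * b * f * (f * a * e)
      = e * a * (f * f) * b * e + e * b * (f * f) * a * e := by noncomm_ring
    _ = e * (a * f * b + b * f * a) * e := by rw [hff.eq]; noncomm_ring

lemma exists_mul_transpose_eq_smul (hA : IsSymmJordan A) (he : IsAbsPrimitive A e)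
    (hf : f ∈ A) (hff : IsIdempotentElem f) (hy : y ∈ peirceBlock A e f) :
    ∃ c : F, y * yᵀ = c • e := by
  obtain ⟨c, hc⟩ := exists_mul_transpose_add_eq_smul hA he hf hff hy hy
  refine ⟨2⁻¹ * c, ?_⟩
  rw [← smul_smul, ← hc, ← two_smul F, smul_smul, inv_mul_cancel₀ two_ne_zero, one_smul]

lemma transpose_mul_eq_smul_of_mul_transpose_eq_smul (hA : IsSymmJordan A) (he : e ∈ A)
    (hee : IsIdempotentElem e) (hf : IsAbsPrimitive A f) (hy : y ∈ peirceBlock A e f) {c : F}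
    (hyy : y * yᵀ = c • e) (hy0 : y ≠ 0) : yᵀ * y = c • f := by
  obtain ⟨d, hd⟩ :=
    exists_mul_transpose_eq_smul hA hf he hee (hA.transpose_mem_peirceBlock he hf.mem hy)
  rw [transpose_transpose] at hd
  have hdy : d • y = c • y := by
    calc d • y = y * (yᵀ * y) := by
          rw [hd, mul_smul_comm, peirceBlock_mul_right hf.idem hy]
      _ = c • y := by
          rw [← mul_assoc, hyy, smul_mul_assoc, peirceBlock_left_mul hee hy]
  rw [hd, smul_left_injective F hy0 hdy]

lemma mul_transpose_eq_zero_of_orthogonal (hy : y ∈ peirceBlock A e f)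
    (hyv : ∀ v ∈ peirceBlock A e f, y * vᵀ + v * yᵀ = 0) : y * yᵀ = 0 := by
  have hyy := hyv y hy
  rw [← two_smul F] at hyy
  exact (smul_eq_zero.mp hyy).resolve_left two_ne_zero

lemma transpose_mul_eq_zero_of_orthogonal (hA : IsSymmJordan A) (he : IsAbsPrimitive A e)
    (hf : IsAbsPrimitive A f) (hy : y ∈ peirceBlock A e f)
    (hyv : ∀ v ∈ peirceBlock A e f, y * vᵀ + v * yᵀ = 0) : yᵀ * y = 0 := by
  rcases eq_or_ne y 0 with rfl | hy0
  · simp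
  have hyy : y * yᵀ = (0 : F) • e := by
    rw [mul_transpose_eq_zero_of_orthogonal hy hyv, zero_smul]
  rw [transpose_mul_eq_smul_of_mul_transpose_eq_smul hA he.mem he.idem hf hy hyy hy0, zero_smul]

lemma mul_mul_self_eq_zero_of_orthogonal (hA : IsSymmJordan A) (he : IsAbsPrimitive A e)
    (hf : IsAbsPrimitive A f) (hy : y ∈ peirceBlock A e f)
    (hyv : ∀ v ∈ peirceBlock A e f, y * vᵀ + v * yᵀ = 0) (hb : b ∈ A) : y * b * y = 0 := by
  have hyb := hyv _ (mul_mul_mem_peirceBlock hb)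
  rw [hA.transpose_mul_mul he.mem hf.mem hb] at hyb
  calc y * b * y = y * f * b * (e * y) := by
        rw [peirceBlock_left_mul he.idem hy, peirceBlock_mul_right hf.idem hy]
    _ = y * (f * b * e) * y := by noncomm_ring
    _ = -(e * b * f * (yᵀ * y)) := by
        rw [eq_neg_of_add_eq_zero_left hyb, neg_mul, mul_assoc _ yᵀ]
    _ = 0 := by rw [transpose_mul_eq_zero_of_orthogonal hA he hf hy hyv, mul_zero, neg_zero]

lemma eq_zero_of_orthogonal (hA : IsSymmJordan A) (hnd : IsNondegenerate A)
    (he : IsAbsPrimitive A e) (hf : IsAbsPrimitive A f) (hef : e * f = 0)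
    (hy : y ∈ peirceBlock A e f) (hyv : ∀ v ∈ peirceBlock A e f, y * vᵀ + v * yᵀ = 0) :
    y = 0 := by
  have hty := hA.transpose_mem_peirceBlock he.mem hf.mem hy
  have hsum : y + yᵀ = 0 := by
    refine hnd (hA.add_transpose_mem he.mem hf.mem hy) fun b hb ↦ ?_
    have hyby := mul_mul_self_eq_zero_of_orthogonal hA he hf hy hyv hb
    have htbt : yᵀ * b * yᵀ = 0 := by
      simpa [transpose_mul, hA.symm b hb, mul_assoc] using congrArg transpose hyby
    obtain ⟨c, hybt⟩ := exists_mul_mul_transpose_eq_smul hA he.mem hf hy hb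
    obtain ⟨d, htby⟩ := exists_mul_mul_transpose_eq_smul hA hf.mem he hty hb
    rw [mul_transpose_eq_zero_of_orthogonal hy hyv, smul_zero] at hybt
    rw [transpose_transpose, transpose_mul_eq_zero_of_orthogonal hA he hf hy hyv,
      smul_zero] at htby
    calc (y + yᵀ) * b * (y + yᵀ) = y * b * y + y * b * yᵀ + (yᵀ * b * y + yᵀ * b * yᵀ) := by
          noncomm_ring
      _ = 0 := by rw [hyby, hybt, htby, htbt]; simp
  have het : e * yᵀ = 0 := by
    rw [← peirceBlock_left_mul hf.idem hty, ← mul_assoc, hef, zero_mul]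
  calc y = e * (y + yᵀ) := by
        rw [mul_add, het, add_zero, peirceBlock_left_mul he.idem hy]
    _ = 0 := by rw [hsum, mul_zero]

end SymmetricPeirce

section Connecting

variable {F N : Type*} [Field F] [Fintype N] [DecidableEq N] {A : Submodule F (Matrix N N F)}
  {e f g u v : Matrix N N F}

lemma IsAbsPrimitive.isConnecting_self (hA : IsSymmJordan A) (he : IsAbsPrimitive A e) :
    IsConnecting A e e e where
  mem := he.mem_peirceBlock
  mul_transpose := by rw [hA.symm e he.mem, he.idem.eq]
  transpose_mul := by rw [hA.symm e he.mem, he.idem.eq]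

lemma IsConnecting.transpose (hA : IsSymmJordan A) (he : e ∈ A) (hf : f ∈ A)
    (hu : IsConnecting A e f u) : IsConnecting A f e uᵀ where
  mem := hA.transpose_mem_peirceBlock he hf hu.mem
  mul_transpose := by rw [transpose_transpose, hu.transpose_mul]
  transpose_mul := by rw [transpose_transpose, hu.mul_transpose]

lemma IsConnecting.mul (hf : IsIdempotentElem f) (hu : IsConnecting A e f u)
    (hv : IsConnecting A f g v) (huv : u * v ∈ peirceBlock A e g) :
    IsConnecting A e g (u * v) where
  mem := huv
  mul_transpose := by
    calc u * v * (u * v)ᵀ = u * (v * vᵀ) * uᵀ := by rw [Matrix.transpose_mul]; noncomm_ring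
      _ = e := by rw [hv.mul_transpose, peirceBlock_mul_right hf hu.mem, hu.mul_transpose]
  transpose_mul := by
    calc (u * v)ᵀ * (u * v) = vᵀ * (uᵀ * u * v) := by rw [Matrix.transpose_mul]; noncomm_ring
      _ = g := by rw [hu.transpose_mul, peirceBlock_left_mul hf hv.mem, hv.transpose_mul]

lemma IsConnecting.rank_le (hf : IsIdempotentElem f) (hu : IsConnecting A e f u) :
    e.rank ≤ f.rank := by
  calc e.rank = (u * (f * uᵀ)).rank := by
        rw [← mul_assoc, peirceBlock_mul_right hf hu.mem, hu.mul_transpose]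
    _ ≤ (f * uᵀ).rank := rank_mul_le_right _ _
    _ ≤ f.rank := rank_mul_le_left _ _

lemma IsConnecting.rank_eq (hA : IsSymmJordan A) (he : IsAbsPrimitive A e)
    (hf : IsAbsPrimitive A f) (hu : IsConnecting A e f u) : e.rank = f.rank :=
  (hu.rank_le hf.idem).antisymm ((hu.transpose hA he.mem hf.mem).rank_le he.idem)

variable [NeZero (2 : F)]

lemma exists_mul_transpose_ne_zero (hA : IsSymmJordan A) (hnd : IsNondegenerate A)
    (he : IsAbsPrimitive A e) (hf : IsAbsPrimitive A f) (hef : e * f = 0)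
    (hne : peirceBlock A e f ≠ ⊥) : ∃ w ∈ peirceBlock A e f, w * wᵀ ≠ 0 := by
  by_contra! hzero
  obtain ⟨y, hy, hy0⟩ := Submodule.exists_mem_ne_zero_of_ne_bot hne
  refine hy0 (eq_zero_of_orthogonal hA hnd he hf hef hy fun v hv ↦ ?_)
  calc y * vᵀ + v * yᵀ = (y + v) * (y + v)ᵀ - y * yᵀ - v * vᵀ := by
        rw [transpose_add]; noncomm_ring
    _ = 0 := by rw [hzero _ (add_mem hy hv), hzero y hy, hzero v hv]; simp

lemma exists_isConnecting_of_peirceBlock_ne_bot [IsAlgClosed F] (hA : IsSymmJordan A)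
    (hnd : IsNondegenerate A) (he : IsAbsPrimitive A e) (hf : IsAbsPrimitive A f)
    (hef : e * f = 0) (hne : peirceBlock A e f ≠ ⊥) : ∃ u, IsConnecting A e f u := by
  obtain ⟨w, hw, hw0⟩ := exists_mul_transpose_ne_zero hA hnd he hf hef hne
  obtain ⟨c, hc⟩ := exists_mul_transpose_eq_smul hA he hf.mem hf.idem hw
  have hc0 : c ≠ 0 := by
    rintro rfl
    exact hw0 (by rw [hc, zero_smul])
  obtain ⟨d, hd⟩ := IsAlgClosed.exists_pow_nat_eq c⁻¹ (n := 2) two_pos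
  have hu : d • w ∈ peirceBlock A e f := Submodule.smul_mem _ d hw
  have huu : d • w * (d • w)ᵀ = (1 : F) • e := by
    rw [transpose_smul, smul_mul_smul_comm, hc, smul_smul, ← pow_two, hd, inv_mul_cancel₀ hc0]
  have hu0 : d • w ≠ 0 := by
    intro h
    rw [h, zero_mul, one_smul] at huu
    exact he.ne_zero huu.symm
  refine ⟨d • w, hu, by rw [huu, one_smul], ?_⟩
  rw [transpose_mul_eq_smul_of_mul_transpose_eq_smul hA he.mem he.idem hf hu huu hu0, one_smul]

end Connecting

section SimpleCentroid

variable {F R : Type*} [Field F] [Ring R] [Algebra F R] {A : Submodule F R}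

lemma IsJordanSimple.mul_eq_self_of_commute {g : R} (hA : IsJordanSimple A)
    (hg : ∀ a ∈ A, Commute g a) {x : R} (hx : x ∈ A) (hx0 : x ≠ 0) (hgx : g * x = x) {a : R}
    (ha : a ∈ A) : g * a = a := by
  let I : Submodule F R := A ⊓ LinearMap.ker (LinearMap.mulLeft F g - LinearMap.id)
  have mem_I {y : R} : y ∈ I ↔ y ∈ A ∧ g * y = y := by simp [I, sub_eq_zero]
  have hI := hA.eq_bot_or_eq I inf_le_left fun y hy w hw ↦ by
    obtain ⟨hwA, hgw⟩ := mem_I.mp hw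
    refine mem_I.mpr ⟨hA.closed hy hwA, ?_⟩
    rw [mul_add, ← mul_assoc, ← mul_assoc, hgw, (hg y hy).eq, mul_assoc, hgw]
  rcases hI with hbot | htop
  · exact absurd ((Submodule.mem_bot F).mp (hbot ▸ mem_I.mpr ⟨hx, hgx⟩)) hx0
  · exact (mem_I.mp (htop ▸ ha)).2

end SimpleCentroid

section FrameConnectedness

variable {F N ι : Type*} [Field F] [Fintype N] [DecidableEq N]
  {A : Submodule F (Matrix N N F)} {e : ι → Matrix N N F} {i j k : ι}

variable [NeZero (2 : F)]

lemma IsFrame.mul_mem_peirceBlock (hA : IsSymmJordan A) (he : IsFrame A e) {y v : Matrix N N F}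
    (hij : i ≠ j) (hik : i ≠ k) (hy : y ∈ peirceBlock A (e i) (e j))
    (hv : v ∈ peirceBlock A (e j) (e k)) : y * v ∈ peirceBlock A (e i) (e k) := by
  rcases eq_or_ne j k with rfl | hjk
  · obtain ⟨c, rfl⟩ := (he.prim j).exists_smul_of_mem_peirceBlock hv
    rw [mul_smul_comm, peirceBlock_mul_right (he.prim j).idem hy]
    exact Submodule.smul_mem _ c hy
  · exact HFn.mul_mem_peirceBlock hA (he.prim i) (he.prim j) (he.prim k) (he.ortho hij)
      (he.ortho hik) (he.ortho hjk) hy hv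

lemma IsFrame.isConnecting_trans (hA : IsSymmJordan A) (he : IsFrame A e) {u v : Matrix N N F}
    (hu : IsConnecting A (e i) (e j) u) (hv : IsConnecting A (e j) (e k) v) :
    ∃ w, IsConnecting A (e i) (e k) w := by
  rcases eq_or_ne i j with rfl | hij
  · exact ⟨v, hv⟩
  rcases eq_or_ne i k with rfl | hik
  · exact ⟨e i, (he.prim i).isConnecting_self hA⟩
  · exact ⟨u * v, hu.mul (he.prim j).idem hv (he.mul_mem_peirceBlock hA hij hik hu.mem hv.mem)⟩

variable [Finite ι]

-- `g = ∑ k ∈ K, e k` satisfies `g a = g a g`, because `1 - g` acts on `A` as the complementary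
-- sum; transposing gives `a g = g a g`.
lemma IsFrame.commute_sum_of_peirceBlock_eq_zero (hA : IsSymmJordan A) (hnd : IsNondegenerate A)
    (he : IsFrame A e) (K : Finset ι) (hK : ∀ k ∈ K, ∀ l ∉ K, ∀ a ∈ A, e k * a * e l = 0)
    {a : Matrix N N F} (ha : a ∈ A) : Commute (∑ k ∈ K, e k) a := by
  classical
  cases nonempty_fintype ι
  have hcompl : (∑ k ∈ K, e k) * a * ∑ l ∈ Kᶜ, e l = 0 := by
    simp_rw [Finset.sum_mul, Finset.mul_sum]
    exact Finset.sum_eq_zero fun k hk ↦ Finset.sum_eq_zero fun l hl ↦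
      hK k hk l (Finset.mem_compl.mp hl) a ha
  have hga : (∑ k ∈ K, e k) * a = (∑ k ∈ K, e k) * a * ∑ k ∈ K, e k := by
    conv_lhs => rw [← (he.sum_mul_eq_self_and_mul_sum_eq_self hA.closed hnd ha).2,
      ← Finset.sum_add_sum_compl K e, ← mul_assoc, mul_add, hcompl, add_zero]
  have hsymm : (∑ k ∈ K, e k)ᵀ = ∑ k ∈ K, e k :=
    hA.symm _ (A.sum_mem fun k _ ↦ (he.prim k).mem)
  have hag := congrArg transpose hga
  rw [transpose_mul, transpose_mul, transpose_mul, hsymm, hA.symm a ha, ← mul_assoc] at hag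
  exact hga.trans hag.symm

theorem IsFrame.exists_isConnecting [IsAlgClosed F] (hA : IsSymmJordan A) (hs : IsJordanSimple A)
    (he : IsFrame A e) (i j : ι) : ∃ u, IsConnecting A (e i) (e j) u := by
  classical
  cases nonempty_fintype ι
  have hnd := hs.isNondegenerate
  let K : Finset ι := {k | ∃ u, IsConnecting A (e i) (e k) u}
  have hiK : i ∈ K := by simpa [K] using ⟨e i, (he.prim i).isConnecting_self hA⟩
  have hK (k : ι) (hk : k ∈ K) (l : ι) (hl : l ∉ K) (a : Matrix N N F) (ha : a ∈ A) :
      e k * a * e l = 0 := by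
    by_contra hne
    obtain ⟨u, hu⟩ : ∃ u, IsConnecting A (e i) (e k) u := by simpa [K] using hk
    have hkl : k ≠ l := fun h ↦ hl (h ▸ hk)
    obtain ⟨v, hv⟩ := exists_isConnecting_of_peirceBlock_ne_bot hA hnd (he.prim k) (he.prim l)
      (he.ortho hkl) (Submodule.ne_bot_iff _ |>.mpr ⟨_, mul_mul_mem_peirceBlock ha, hne⟩)
    exact hl (by simpa [K] using he.isConnecting_trans hA hu hv)
  have hsum_mul (k : ι) : (∑ l ∈ K, e l) * e k = if k ∈ K then e k else 0 := by
    simp [Finset.sum_mul, he.orthogonalIdempotents.mul_eq]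
  have hj := hs.mul_eq_self_of_commute
    (fun a ha ↦ he.commute_sum_of_peirceBlock_eq_zero hA hnd K hK ha) (he.prim i).mem
    (he.prim i).ne_zero (by rw [hsum_mul, if_pos hiK]) (he.prim j).mem
  have hjK : j ∈ K := by
    by_contra hjK
    rw [hsum_mul, if_neg hjK] at hj
    exact (he.prim j).ne_zero hj.symm
  simpa [K] using hjK

end FrameConnectedness

section SymmetricMatrices

variable {F N : Type*} [Field F] [Fintype N]

lemma dotProduct_mulVec_eq_mulVec_dotProduct {X : Matrix N N F} (hX : Xᵀ = X) (v w : N → F) :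
    v ⬝ᵥ X *ᵥ w = X *ᵥ v ⬝ᵥ w := by
  rw [dotProduct_mulVec, ← mulVec_transpose, hX]

lemma exists_mul_mul_eq_smul_of_rank_le_one {E : Matrix N N F} (hE : E.rank ≤ 1)
    (X : Matrix N N F) : ∃ c : F, E * X * E = c • E := by
  classical
  obtain ⟨v, hv⟩ := finrank_le_one_iff.mp hE
  obtain ⟨c, hc⟩ := hv ⟨E *ᵥ X *ᵥ v.1, _, rfl⟩
  refine ⟨c, ext_of_mulVec_single fun i ↦ ?_⟩
  obtain ⟨d, hd⟩ := hv ⟨E *ᵥ Pi.single i 1, _, rfl⟩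
  have hcv : E *ᵥ X *ᵥ v.1 = c • v.1 := (congrArg Subtype.val hc).symm
  have hdv : E *ᵥ Pi.single i 1 = d • v.1 := (congrArg Subtype.val hd).symm
  rw [smul_mulVec, hdv, ← mulVec_mulVec, ← mulVec_mulVec, hdv, mulVec_smul, mulVec_smul, hcv,
    smul_comm]

lemma exists_symm_mulVec_eq {v : N → F} (hv : v ≠ 0) (w : N → F) :
    ∃ X : Matrix N N F, Xᵀ = X ∧ X *ᵥ v = w := by
  classical
  obtain ⟨k, hk⟩ : ∃ k, v k ≠ 0 := Function.ne_iff.mp hv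
  let d : N → F := Pi.single k 1
  have hd : d ⬝ᵥ v = v k := by simp [d]
  refine ⟨(v k)⁻¹ • (vecMulVec w d + vecMulVec d w)
    - ((v k)⁻¹ * (v k)⁻¹ * (w ⬝ᵥ v)) • vecMulVec d d, ?_, ?_⟩
  · simp only [transpose_sub, transpose_smul, transpose_add, transpose_vecMulVec, add_comm]
  · ext i
    simp only [sub_mulVec, smul_mulVec, add_mulVec, vecMulVec_mulVec, hd, Pi.sub_apply,
      Pi.smul_apply, Pi.add_apply, smul_eq_mul, MulOpposite.smul_eq_mul_unop,
      MulOpposite.unop_op]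
    field_simp
    ring

lemma exists_anisotropic_mulVec_eq_self [NeZero (2 : F)] {E : Matrix N N F} (hsymm : Eᵀ = E)
    (hidem : IsIdempotentElem E) (hE : E ≠ 0) : ∃ v, E *ᵥ v = v ∧ v ⬝ᵥ v ≠ 0 := by
  classical
  have : Invertible (2 : F) := invertibleOfNonzero two_ne_zero
  have hB : LinearMap.IsSymm (toBilin' E) := ⟨fun v w ↦ by
    rw [RingHom.id_apply, toBilin'_apply', toBilin'_apply',
      dotProduct_mulVec_eq_mulVec_dotProduct hsymm, dotProduct_comm]⟩
  obtain ⟨v, hv⟩ := LinearMap.BilinForm.exists_bilinForm_self_ne_zero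
    (toBilin'.map_ne_zero_iff.mpr hE) hB
  refine ⟨E *ᵥ v, by rw [mulVec_mulVec, hidem.eq], ?_⟩
  rwa [toBilin'_apply', ← hidem.eq, ← mulVec_mulVec,
    dotProduct_mulVec_eq_mulVec_dotProduct hsymm] at hv

lemma mul_add_one_le_two_mul_finrank_symSub (n : ℕ) :
    n * (n + 1) ≤ 2 * Module.finrank F (symSub F n) := by
  let φ : (Sym2 (Fin n) → F) →ₗ[F] symSub F n :=
    { toFun g := ⟨of fun i j ↦ g s(i, j), by
        change _ᵀ = _
        ext i j
        simp [Sym2.eq_swap]⟩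
      map_add' _ _ := rfl
      map_smul' _ _ := rfl }
  have hφ : Function.Injective φ := fun a b hab ↦ by
    ext s
    induction s with
    | _ i j => exact congrArg (fun X ↦ X.1 i j) hab
  calc n * (n + 1) = 2 * (n + 1).choose 2 := by
        rw [Nat.choose_two_right, ← Finset.sum_range_id, mul_comm 2,
          Finset.sum_range_id_mul_two, Nat.add_sub_cancel, mul_comm]
    _ = 2 * Module.finrank F (Sym2 (Fin n) → F) := by
        rw [Module.finrank_fintype_fun_eq_card, Sym2.card, Fintype.card_fin]
    _ ≤ 2 * Module.finrank F (symSub F n) :=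
        Nat.mul_le_mul_left 2 (LinearMap.finrank_le_finrank_of_injective hφ)

lemma sum_rank_le_card [DecidableEq N] {ι : Type*} [Fintype ι] {e : ι → Matrix N N F}
    (he : OrthogonalIdempotents e) : ∑ i, (e i).rank ≤ Fintype.card N := by
  classical
  let V (i : ι) := LinearMap.range (e i).mulVecLin
  have hV (j i : ι) (w : V i) : e j *ᵥ w.1 = if j = i then w.1 else 0 := by
    obtain ⟨x, hx⟩ := w.2
    rw [← hx, mulVecLin_apply, mulVec_mulVec, he.mul_eq]
    split_ifs with h
    · rw [h]
    · rw [zero_mulVec]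
  let φ : (∀ i, V i) →ₗ[F] (N → F) := ∑ i, (V i).subtype ∘ₗ LinearMap.proj i
  have hφ : Function.Injective φ := by
    refine (injective_iff_map_eq_zero φ).mpr fun w hw ↦ funext fun j ↦ Subtype.ext ?_
    calc (w j).1 = e j *ᵥ φ w := by simp [φ, mulVec_sum, hV]
      _ = 0 := by rw [hw, mulVec_zero]
  calc ∑ i, (e i).rank = Module.finrank F (∀ i, V i) := by
        rw [Module.finrank_pi_fintype]; rfl
    _ ≤ Module.finrank F (N → F) := LinearMap.finrank_le_finrank_of_injective hφ
    _ = Fintype.card N := Module.finrank_fintype_fun_eq_card F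

end SymmetricMatrices

section Dimension

lemma eq_zero_of_mul_mul_eq_zero {R ι : Type*} [Ring R] [Fintype ι] {a : R} {e : ι → R}
    (hsum : (∑ i, e i) * a = a ∧ a * (∑ i, e i) = a) (h : ∀ i j, e i * a * e j = 0) : a = 0 := by
  rw [← hsum.2, ← hsum.1, Finset.sum_mul, Finset.sum_mul_sum]
  exact Finset.sum_eq_zero fun i _ ↦ Finset.sum_eq_zero fun j _ ↦ h i j

variable {F N : Type*} [Field F] [Fintype N] [DecidableEq N] {A : Submodule F (Matrix N N F)}
  {a e f u y : Matrix N N F} {v : N → F}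

lemma IsAbsPrimitive.mul_mul_eq_zero_of_dotProduct_eq_zero (hA : IsSymmJordan A)
    (he : IsAbsPrimitive A e) (ha : a ∈ A) (hev : e *ᵥ v = v) (hvv : v ⬝ᵥ v ≠ 0)
    (hav : v ⬝ᵥ a *ᵥ v = 0) : e * a * e = 0 := by
  obtain ⟨c, hc⟩ := he.exists_smul a ha
  have hcv : c * (v ⬝ᵥ v) = 0 := by
    calc c * (v ⬝ᵥ v) = v ⬝ᵥ (e * a * e) *ᵥ v := by
          rw [hc, smul_mulVec, hev, dotProduct_smul, smul_eq_mul]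
      _ = v ⬝ᵥ a *ᵥ v := by
          rw [← mulVec_mulVec, ← mulVec_mulVec, hev,
            dotProduct_mulVec_eq_mulVec_dotProduct (hA.symm e he.mem), hev]
      _ = 0 := hav
  rw [hc, (mul_eq_zero.mp hcv).resolve_right hvv, zero_smul]

lemma IsConnecting.mul_mul_mem_peirceBlock_of_rank_le_one (he : IsIdempotentElem e)
    (hu : IsConnecting A e f u) (hr : e.rank ≤ 1) (X : Matrix N N F) :
    e * X * f ∈ peirceBlock A e f := by
  have heu := peirceBlock_left_mul he hu.mem
  obtain ⟨c, hc⟩ := exists_mul_mul_eq_smul_of_rank_le_one hr (X * uᵀ)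
  have hX : e * X * f = c • u := by
    calc e * X * f = e * X * (uᵀ * (e * u)) := by rw [heu, hu.transpose_mul]
      _ = e * (X * uᵀ) * e * u := by noncomm_ring
      _ = c • u := by rw [hc, smul_mul_assoc, heu]
  rw [hX]
  exact Submodule.smul_mem _ c hu.mem

variable [NeZero (2 : F)]

lemma eq_zero_of_mem_peirceBlock_of_mulVec_eq_zero (hA : IsSymmJordan A) (hnd : IsNondegenerate A)
    (he : IsAbsPrimitive A e) (hf : IsAbsPrimitive A f) (hfe : f * e = 0)
    (hy : y ∈ peirceBlock A e f) (hfv : f *ᵥ v = v) (hvv : v ⬝ᵥ v ≠ 0) (hyv : y *ᵥ v = 0) :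
    y = 0 := by
  have hty := hA.transpose_mem_peirceBlock he.mem hf.mem hy
  refine transpose_eq_zero.mp (eq_zero_of_orthogonal hA hnd hf he hfe hty fun w hw ↦ ?_)
  obtain ⟨c, hc⟩ := exists_mul_transpose_add_eq_smul hA hf he.mem he.idem hty hw
  have hcv : c * (v ⬝ᵥ v) = 0 := by
    calc c * (v ⬝ᵥ v) = v ⬝ᵥ (yᵀ * wᵀ + w * yᵀᵀ) *ᵥ v := by
          rw [hc, smul_mulVec, hfv, dotProduct_smul, smul_eq_mul]
      _ = 0 := by
          rw [transpose_transpose, add_mulVec, ← mulVec_mulVec, ← mulVec_mulVec, hyv, mulVec_zero,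
            add_zero, dotProduct_mulVec, vecMul_transpose, hyv, zero_dotProduct]
  rw [hc, (mul_eq_zero.mp hcv).resolve_right hvv, zero_smul]

lemma IsFrame.eq_zero_of_mulVec_eq_zero {ι : Type*} [Finite ι] [LinearOrder ι]
    {e : ι → Matrix N N F} (hA : IsSymmJordan A) (hnd : IsNondegenerate A) (he : IsFrame A e)
    {v : ι → N → F} (hev : ∀ i, e i *ᵥ v i = v i) (hvv : ∀ i, v i ⬝ᵥ v i ≠ 0) (ha : a ∈ A)
    (hdiag : ∀ i, v i ⬝ᵥ a *ᵥ v i = 0) (hupper : ∀ i j, i < j → e i *ᵥ a *ᵥ v j = 0) : a = 0 := by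
  cases nonempty_fintype ι
  have hblock (i j : ι) (hij : i < j) : e i * a * e j = 0 := by
    refine eq_zero_of_mem_peirceBlock_of_mulVec_eq_zero hA hnd (he.prim i) (he.prim j)
      (he.ortho hij.ne') (mul_mul_mem_peirceBlock ha) (hev j) (hvv j) ?_
    rw [← mulVec_mulVec, ← mulVec_mulVec, hev, hupper i j hij]
  refine eq_zero_of_mul_mul_eq_zero (he.sum_mul_eq_self_and_mul_sum_eq_self hA.closed hnd ha)
    fun i j ↦ ?_
  rcases lt_trichotomy i j with hij | rfl | hij
  · exact hblock i j hij
  · exact (he.prim i).mul_mul_eq_zero_of_dotProduct_eq_zero hA ha (hev i) (hvv i) (hdiag i)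
  · rw [← hA.transpose_mul_mul (he.prim j).mem (he.prim i).mem ha, hblock j i hij, transpose_zero]

theorem IsFrame.two_mul_finrank_le {m r : ℕ} {e : Fin m → Matrix N N F} (hA : IsSymmJordan A)
    (hnd : IsNondegenerate A) (he : IsFrame A e) (hr : ∀ i, (e i).rank = r) :
    2 * Module.finrank F A ≤ 2 * m + r * (m * (m - 1)) := by
  choose v hev hvv using fun i ↦ exists_anisotropic_mulVec_eq_self (hA.symm _ (he.prim i).mem)
    (he.prim i).idem (he.prim i).ne_zero
  let V (i : Fin m) := LinearMap.range (e i).mulVecLin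
  let eval (j : Fin m) : A →ₗ[F] (N → F) := (mulVecBilin F F).flip (v j) ∘ₗ A.subtype
  let φ : A →ₗ[F] (Fin m → F) × (∀ j : Fin m, ∀ i : Finset.Iio j, V i) :=
    (LinearMap.pi fun j ↦ dotProductBilin F F (v j) ∘ₗ eval j).prod
      (LinearMap.pi fun j ↦ LinearMap.pi fun i ↦ (e i).mulVecLin.rangeRestrict ∘ₗ eval j)
  have hφ : Function.Injective φ := by
    refine (injective_iff_map_eq_zero φ).mpr fun a ha ↦ Subtype.ext ?_
    refine he.eq_zero_of_mulVec_eq_zero hA hnd hev hvv a.2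
      (fun j ↦ congrFun (congrArg Prod.fst ha) j) fun i j hij ↦ ?_
    exact congrArg Subtype.val
      (congrFun (congrFun (congrArg Prod.snd ha) j) ⟨i, Finset.mem_Iio.mpr hij⟩)
  have hV (i : Fin m) : Module.finrank F (V i) = r := hr i
  have hle := LinearMap.finrank_le_finrank_of_injective hφ
  simp only [Module.finrank_prod, Module.finrank_fintype_fun_eq_card, Module.finrank_pi_fintype,
    hV, Finset.sum_const, Finset.card_univ, Fintype.card_coe, Fin.card_Iio, Fintype.card_fin,
    smul_eq_mul] at hle
  rw [← Finset.sum_mul, Fin.sum_univ_eq_sum_range fun i ↦ i] at hle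
  calc 2 * Module.finrank F A ≤ 2 * (m + (∑ i ∈ Finset.range m, i) * r) :=
        Nat.mul_le_mul_left 2 hle
    _ = 2 * m + r * ((∑ i ∈ Finset.range m, i) * 2) := by ring
    _ = 2 * m + r * (m * (m - 1)) := by rw [Finset.sum_range_id_mul_two]

lemma four_mul_add_lt {m r : ℕ} (hm : 0 < m) (hr : 2 ≤ r) :
    2 * (2 * m + r * (m * (m - 1))) < m * r * (m * r + 1) := by
  obtain ⟨k, rfl⟩ := Nat.exists_eq_add_of_lt hm
  obtain ⟨s, rfl⟩ := Nat.exists_eq_add_of_le hr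
  rw [zero_add, Nat.add_sub_cancel]
  nlinarith [Nat.zero_le ((k + 1) * ((k + 1) * (s * (s + 2)) + 3 * s))]

-- `2 X = ∑ i, ∑ j, (e i X e j + (e i X e j)ᵀ)`.
lemma IsFrame.mem_of_rank_le_one {ι : Type*} [Fintype ι] {e : ι → Matrix N N F}
    (hA : IsSymmJordan A) (he : IsFrame A e)
    (hconn : ∀ i j, ∃ u, IsConnecting A (e i) (e j) u) (hr : ∀ i, (e i).rank ≤ 1)
    (hsum : ∑ i, e i = 1) {X : Matrix N N F} (hX : Xᵀ = X) : X ∈ A := by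
  have hblock (i j : ι) : e i * X * e j + (e i * X * e j)ᵀ ∈ A := by
    obtain ⟨u, hu⟩ := hconn i j
    exact hA.add_transpose_mem (he.prim i).mem (he.prim j).mem
      (hu.mul_mul_mem_peirceBlock_of_rank_le_one (he.prim i).idem (hr i) X)
  have hX_sum : ∑ i, ∑ j, e i * X * e j = X := by
    simp_rw [← Finset.mul_sum, ← Finset.sum_mul, hsum, one_mul, mul_one]
  refine mem_of_add_self_mem (F := F) ?_
  have hmem := A.sum_mem fun i (_ : i ∈ Finset.univ) ↦
    A.sum_mem fun j (_ : j ∈ Finset.univ) ↦ hblock i j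
  simpa only [Finset.sum_add_distrib, ← transpose_sum, hX_sum, hX] using hmem

end Dimension

section QuadraticCorner

variable {F N : Type*} [Field F] [Fintype N]

/-- `D` is a space of matrices with unit `E` whose elements have scalar trace `x + xᵀ` and whose
norm form `x ↦ x xᵀ` is nondegenerate. The coordinate spaces of a Jordan algebra of symmetric
matrices have this form; closure under multiplication is not part of the definition because it
can fail for algebras of degree two. -/
structure IsQuadraticCorner (D : Submodule F (Matrix N N F)) (E : Matrix N N F) : Prop where
  symm : Eᵀ = E
  ne_zero : E ≠ 0
  mem : E ∈ D
  left_mul : ∀ x ∈ D, E * x = x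
  mul_right : ∀ x ∈ D, x * E = x
  exists_smul : ∀ x ∈ D, ∃ c : F, x + xᵀ = c • E
  nondegenerate : ∀ x ∈ D, (∀ w ∈ D, x * wᵀ + w * xᵀ = 0) → x = 0

/-- The corner of `E` contains a nonzero skew-symmetric matrix commuting with `D`. -/
def HasSkewCentralizer (D : Submodule F (Matrix N N F)) (E : Matrix N N F) : Prop :=
  ∃ s, s ≠ 0 ∧ sᵀ = -s ∧ E * s = s ∧ ∀ w ∈ D, Commute s w

/-- `p` and `pᵀ` are orthogonal idempotents of `D` with sum `E`. -/
structure IsIsotropicIdempotent (D : Submodule F (Matrix N N F)) (E p : Matrix N N F) :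
    Prop where
  mem : p ∈ D
  idem : p * p = p
  mul_transpose : p * pᵀ = 0
  transpose_mul : pᵀ * p = 0
  add_transpose : p + pᵀ = E

/-- `p`, `x`, `y`, `pᵀ` multiply like the `2 × 2` matrix units `E₁₁`, `E₁₂`, `E₂₁`, `E₂₂`, and
transposition induces on their span the symplectic involution. -/
structure IsSymplecticUnits (p x y : Matrix N N F) : Prop where
  idem : p * p = p
  mul_transpose : p * pᵀ = 0
  transpose_mul : pᵀ * p = 0
  left_mul : p * x = x
  mul_right : y * p = y
  mul_eq : x * y = p
  skew_left : xᵀ = -x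
  skew_right : yᵀ = -y

variable {D : Submodule F (Matrix N N F)} {E p w x y : Matrix N N F}

section Units

lemma IsSymplecticUnits.mul_transpose_right (h : IsSymplecticUnits p x y) : x * pᵀ = x := by
  simpa [transpose_mul, h.skew_left] using congrArg transpose h.left_mul

lemma IsSymplecticUnits.transpose_left_mul (h : IsSymplecticUnits p x y) : pᵀ * y = y := by
  simpa [transpose_mul, h.skew_right] using congrArg transpose h.mul_right

lemma IsSymplecticUnits.mul_eq_transpose (h : IsSymplecticUnits p x y) : y * x = pᵀ := by
  rw [← h.mul_eq, Matrix.transpose_mul, h.skew_left, h.skew_right, neg_mul_neg]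

lemma IsSymplecticUnits.mul_eq_zero (h : IsSymplecticUnits p x y) : p * y = 0 := by
  rw [← h.transpose_left_mul, ← mul_assoc, h.mul_transpose, zero_mul]

lemma IsSymplecticUnits.mul_self_eq_zero (h : IsSymplecticUnits p x y) : y * y = 0 := by
  nth_rw 1 [← h.mul_right]
  rw [mul_assoc, h.mul_eq_zero, mul_zero]

lemma exists_symm_mul_eq_self (hp : p * p = p) (hp0 : p ≠ 0) :
    ∃ t : Matrix N N F, t ≠ 0 ∧ tᵀ = t ∧ p * t = t := by
  classical
  obtain ⟨w, hw⟩ : ∃ w, p *ᵥ w ≠ 0 := by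
    by_contra! hzero
    exact hp0 (ext_of_mulVec_single fun i ↦ by rw [hzero, zero_mulVec])
  exact ⟨vecMulVec (p *ᵥ w) (p *ᵥ w), vecMulVec_ne_zero hw hw, transpose_vecMulVec _ _,
    by rw [mul_vecMulVec, mulVec_mulVec, hp]⟩

-- In the decomposition `Mat₂ ⊗ C` of the corner given by the matrix units, `t` has the form
-- `E₁₂ ⊗ c`, and `s = t y + y t` is `1 ⊗ c`.
lemma IsSymplecticUnits.exists_skew_commute (h : IsSymplecticUnits p x y) (hp0 : p ≠ 0) :
    ∃ s : Matrix N N F, s ≠ 0 ∧ sᵀ = -s ∧ (p + pᵀ) * s = s ∧ Commute s p ∧ Commute s x ∧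
      Commute s y := by
  obtain ⟨t, ht0, htt, hpt⟩ := exists_symm_mul_eq_self h.idem hp0
  have htq : t * pᵀ = t := by simpa [Matrix.transpose_mul, htt] using congrArg transpose hpt
  have htp : t * p = 0 := by rw [← htq, mul_assoc, h.transpose_mul, mul_zero]
  have hqt : pᵀ * t = 0 := by rw [← hpt, ← mul_assoc, h.transpose_mul, zero_mul]
  have htx : t * x = 0 := by rw [← h.left_mul, ← mul_assoc, htp, zero_mul]
  have hxt : x * t = 0 := by rw [← h.mul_transpose_right, mul_assoc, hqt, mul_zero]
  have hsx : (t * y + y * t) * x = t := by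
    rw [add_mul, mul_assoc, h.mul_eq_transpose, htq, mul_assoc, htx, mul_zero, add_zero]
  have hxs : x * (t * y + y * t) = t := by
    rw [mul_add, ← mul_assoc, hxt, zero_mul, zero_add, ← mul_assoc, h.mul_eq, hpt]
  have hps : p * (t * y + y * t) = t * y := by
    rw [mul_add, ← mul_assoc, hpt, ← mul_assoc, h.mul_eq_zero, zero_mul, add_zero]
  have hsp : (t * y + y * t) * p = t * y := by
    rw [add_mul, mul_assoc, h.mul_right, mul_assoc, htp, mul_zero, add_zero]
  have hys : y * (t * y + y * t) = y * t * y := by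
    rw [mul_add, ← mul_assoc, ← mul_assoc, h.mul_self_eq_zero, zero_mul, add_zero]
  have hsy : (t * y + y * t) * y = y * t * y := by
    rw [add_mul, mul_assoc, h.mul_self_eq_zero, mul_zero, zero_add]
  refine ⟨t * y + y * t, ?_, ?_, ?_, hsp.trans hps.symm, hsx.trans hxs.symm, hsy.trans hys.symm⟩
  · intro hs
    rw [hs, zero_mul] at hsx
    exact ht0 hsx.symm
  · rw [transpose_add, Matrix.transpose_mul, Matrix.transpose_mul, htt, h.skew_right, neg_mul,
      mul_neg, neg_add, add_comm]
  · rw [add_mul, hps, mul_add, ← mul_assoc, hqt, zero_mul, zero_add, ← mul_assoc,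
      h.transpose_left_mul]

end Units

lemma IsQuadraticCorner.transpose_mem (h : IsQuadraticCorner D E) (hx : x ∈ D) : xᵀ ∈ D := by
  obtain ⟨c, hc⟩ := h.exists_smul x hx
  rw [eq_sub_of_add_eq' hc]
  exact D.sub_mem (D.smul_mem _ h.mem) hx

namespace IsIsotropicIdempotent

lemma transpose (h : IsQuadraticCorner D E) (hp : IsIsotropicIdempotent D E p) :
    IsIsotropicIdempotent D E pᵀ where
  mem := h.transpose_mem hp.mem
  idem := by rw [← Matrix.transpose_mul, hp.idem]
  mul_transpose := by rw [transpose_transpose, hp.transpose_mul]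
  transpose_mul := by rw [transpose_transpose, hp.mul_transpose]
  add_transpose := by rw [transpose_transpose, add_comm, hp.add_transpose]

lemma ne_zero (h : IsQuadraticCorner D E) (hp : IsIsotropicIdempotent D E p) : p ≠ 0 := by
  rintro rfl
  exact h.ne_zero (by rw [← hp.add_transpose, transpose_zero, add_zero])

lemma commute_of_offdiagonal_eq_zero (h : IsQuadraticCorner D E)
    (hp : IsIsotropicIdempotent D E p) (hw : w ∈ D) (hpq : p * w * pᵀ = 0)
    (hqp : pᵀ * w * p = 0) : Commute p w := by
  have hpw : p * w = p * w * p := by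
    calc p * w = p * w * (p + pᵀ) := by rw [hp.add_transpose, mul_assoc, h.mul_right w hw]
      _ = p * w * p := by rw [mul_add, hpq, add_zero]
  have hwp : w * p = p * w * p := by
    calc w * p = (p + pᵀ) * w * p := by rw [hp.add_transpose, h.left_mul w hw]
      _ = p * w * p := by rw [add_mul, add_mul, hqp, add_zero]
  exact hpw.trans hwp.symm

lemma hasSkewCentralizer_of_offdiagonal_eq_zero (h : IsQuadraticCorner D E)
    (hp : IsIsotropicIdempotent D E p)
    (hoff : ∀ w ∈ D, p * w * pᵀ = 0 ∧ pᵀ * w * p = 0) : HasSkewCentralizer D E := by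
  have hq := hp.transpose h
  refine ⟨p - pᵀ, fun hzero ↦ hp.ne_zero h ?_, by rw [transpose_sub, transpose_transpose, neg_sub],
    h.left_mul _ (D.sub_mem hp.mem hq.mem), fun w hw ↦ ?_⟩
  · calc p = p * (p - pᵀ) := by rw [mul_sub, hp.idem, hp.mul_transpose, sub_zero]
      _ = 0 := by rw [hzero, mul_zero]
  · exact (hp.commute_of_offdiagonal_eq_zero h hw (hoff w hw).1 (hoff w hw).2).sub_left
      (hq.commute_of_offdiagonal_eq_zero h hw (by rw [transpose_transpose]; exact (hoff w hw).2)
        (by rw [transpose_transpose]; exact (hoff w hw).1))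

lemma exists_mul_mul_eq_smul (h : IsQuadraticCorner D E)
    (hmul : ∀ x ∈ D, ∀ y ∈ D, x * y ∈ D) (hp : IsIsotropicIdempotent D E p) (hw : w ∈ D) :
    ∃ c : F, p * w * p = c • p := by
  obtain ⟨c, hc⟩ := h.exists_smul _ (hmul _ (hmul _ hp.mem _ hw) _ hp.mem)
  refine ⟨c, ?_⟩
  have hpc := congrArg (p * ·) hc
  simpa only [mul_add, Matrix.transpose_mul, mul_smul_comm, h.mul_right p hp.mem, ← mul_assoc,
    hp.idem, hp.mul_transpose, zero_mul, add_zero] using hpc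

lemma transpose_mul_mul_transpose (h : IsQuadraticCorner D E)
    (hmul : ∀ x ∈ D, ∀ y ∈ D, x * y ∈ D) (hp : IsIsotropicIdempotent D E p) (hw : w ∈ D) :
    (p * w * pᵀ)ᵀ = -(p * w * pᵀ) := by
  have hq := hp.transpose h
  obtain ⟨c, hc⟩ := h.exists_smul _ (hmul _ (hmul _ hp.mem _ hw) _ hq.mem)
  have hqc : 0 = c • pᵀ := by
    simpa only [mul_add, Matrix.transpose_mul, transpose_transpose, mul_smul_comm,
      h.mul_right _ hq.mem, ← mul_assoc, hp.transpose_mul, zero_mul, add_zero]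
      using congrArg (pᵀ * ·) hc
  rw [(smul_eq_zero.mp hqc.symm).resolve_right (hq.ne_zero h), zero_smul] at hc
  exact eq_neg_of_add_eq_zero_right hc

lemma exists_isSymplecticUnits (h : IsQuadraticCorner D E)
    (hmul : ∀ x ∈ D, ∀ y ∈ D, x * y ∈ D) (hp : IsIsotropicIdempotent D E p) (hw : w ∈ D)
    (hpw : p * w * pᵀ ≠ 0) : ∃ x ∈ D, ∃ y ∈ D, IsSymplecticUnits p x y := by
  have hq := hp.transpose h
  obtain ⟨x, hx⟩ : ∃ x, x = p * w * pᵀ := ⟨_, rfl⟩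
  have hxD : x ∈ D := hx ▸ hmul _ (hmul _ hp.mem _ hw) _ hq.mem
  have hxt : xᵀ = -x := hx ▸ hp.transpose_mul_mul_transpose h hmul hw
  have hpx : p * x = x := by rw [hx, ← mul_assoc, ← mul_assoc, hp.idem]
  have hxq : x * pᵀ = x := by rw [hx, mul_assoc, hq.idem]
  have hxp : x * p = 0 := by rw [← hxq, mul_assoc, hp.transpose_mul, mul_zero]
  obtain ⟨v, hv, hxv⟩ : ∃ v ∈ D, x * vᵀ + v * xᵀ ≠ 0 := by
    by_contra! hzero
    exact hpw (hx ▸ h.nondegenerate x hxD hzero)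
  obtain ⟨c, hc⟩ := h.exists_smul _ (hmul _ hxD _ (h.transpose_mem hv))
  rw [Matrix.transpose_mul, transpose_transpose] at hc
  have hc0 : c ≠ 0 := by
    rintro rfl
    exact hxv (by rw [hc, zero_smul])
  have hxvp : x * vᵀ * p = c • p := by
    calc x * vᵀ * p = p * (x * vᵀ + v * xᵀ) * p := by
          rw [hxt, mul_add, ← mul_assoc, hpx, add_mul, mul_assoc p, mul_assoc v, neg_mul, hxp,
            neg_zero, mul_zero, mul_zero, add_zero]
      _ = c • p := by rw [hc, mul_smul_comm, h.mul_right p hp.mem, smul_mul_assoc, hp.idem]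
  have hvt := hq.transpose_mul_mul_transpose h hmul (h.transpose_mem hv)
  rw [transpose_transpose] at hvt
  refine ⟨x, hxD, c⁻¹ • (pᵀ * vᵀ * p), D.smul_mem _ (hmul _ (hmul _ hq.mem _
    (h.transpose_mem hv)) _ hp.mem), hp.idem, hp.mul_transpose, hp.transpose_mul, hpx, ?_, ?_,
    hxt, by rw [transpose_smul, hvt, smul_neg]⟩
  · rw [smul_mul_assoc, mul_assoc _ p p, hp.idem]
  · rw [mul_smul_comm, ← mul_assoc, ← mul_assoc, hxq, hxvp, smul_smul, inv_mul_cancel₀ hc0,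
      one_smul]

lemma exists_eq_linearCombination (h : IsQuadraticCorner D E)
    (hmul : ∀ x ∈ D, ∀ y ∈ D, x * y ∈ D) (hp : IsIsotropicIdempotent D E p)
    (hx : x ∈ D) (hy : y ∈ D) (hxy : IsSymplecticUnits p x y) (hw : w ∈ D) :
    ∃ α β γ δ : F, w = α • p + β • x + (γ • y + δ • pᵀ) := by
  obtain ⟨α, hα⟩ := hp.exists_mul_mul_eq_smul h hmul hw
  obtain ⟨β, hβ⟩ := hp.exists_mul_mul_eq_smul h hmul (hmul _ hw _ hy)
  obtain ⟨γ, hγ⟩ := hp.exists_mul_mul_eq_smul h hmul (hmul _ hx _ hw)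
  obtain ⟨δ, hδ⟩ := (hp.transpose h).exists_mul_mul_eq_smul h hmul hw
  refine ⟨α, β, γ, δ, ?_⟩
  have hpwq : p * w * pᵀ = β • x := by
    calc p * w * pᵀ = p * (w * y) * p * x := by
          rw [mul_assoc _ p x, hxy.left_mul, ← hxy.mul_eq_transpose]; simp only [mul_assoc]
      _ = β • x := by rw [hβ, smul_mul_assoc, hxy.left_mul]
  have hqwp : pᵀ * w * p = γ • y := by
    calc pᵀ * w * p = y * p * (x * w) * p := by
          rw [hxy.mul_right, ← hxy.mul_eq_transpose]; simp only [mul_assoc]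
      _ = y * (p * (x * w) * p) := by simp only [mul_assoc]
      _ = γ • y := by rw [hγ, mul_smul_comm, hxy.mul_right]
  calc w = (p + pᵀ) * w * (p + pᵀ) := by
        rw [hp.add_transpose, h.left_mul w hw, h.mul_right w hw]
    _ = α • p + β • x + (γ • y + δ • pᵀ) := by
        rw [← hα, ← hpwq, ← hqwp, ← hδ, add_mul, add_mul, mul_add, mul_add]

lemma hasSkewCentralizer_of_offdiagonal_ne_zero (h : IsQuadraticCorner D E)
    (hmul : ∀ x ∈ D, ∀ y ∈ D, x * y ∈ D) (hp : IsIsotropicIdempotent D E p) (hw : w ∈ D)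
    (hpw : p * w * pᵀ ≠ 0) : HasSkewCentralizer D E := by
  obtain ⟨x, hx, y, hy, hxy⟩ := hp.exists_isSymplecticUnits h hmul hw hpw
  obtain ⟨s, hs0, hst, hEs, hsp, hsx, hsy⟩ := hxy.exists_skew_commute (hp.ne_zero h)
  have hsq : Commute s pᵀ := by
    have htr := congrArg Matrix.transpose hsp.eq
    rw [Matrix.transpose_mul, Matrix.transpose_mul, hst, mul_neg, neg_mul, neg_inj] at htr
    exact htr.symm
  refine ⟨s, hs0, hst, hp.add_transpose ▸ hEs, fun z hz ↦ ?_⟩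
  obtain ⟨α, β, γ, δ, rfl⟩ := hp.exists_eq_linearCombination h hmul hx hy hxy hz
  exact ((hsp.smul_right α).add_right (hsx.smul_right β)).add_right
    ((hsy.smul_right γ).add_right (hsq.smul_right δ))

end IsIsotropicIdempotent

namespace IsQuadraticCorner

variable [NeZero (2 : F)]

lemma exists_skew_add (h : IsQuadraticCorner D E) (hx : x ∈ D) :
    ∃ c : F, ∃ y ∈ D, yᵀ = -y ∧ x = c • E + y := by
  obtain ⟨c, hc⟩ := h.exists_smul x hx
  have hE : c • E = (2⁻¹ * c) • E + (2⁻¹ * c) • E := by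
    rw [← add_smul, ← two_mul, mul_inv_cancel_left₀ two_ne_zero]
  refine ⟨2⁻¹ * c, x - (2⁻¹ * c) • E, D.sub_mem hx (D.smul_mem _ h.mem), ?_, by abel⟩
  rw [transpose_sub, transpose_smul, h.symm, eq_sub_of_add_eq' hc, hE]
  abel

lemma exists_skew_mul_self_ne_zero (h : IsQuadraticCorner D E) (hx : x ∈ D) (hxt : xᵀ = -x)
    (hx0 : x ≠ 0) : ∃ w ∈ D, wᵀ = -w ∧ w * w ≠ 0 := by
  by_contra! hsq
  refine hx0 (h.nondegenerate x hx fun w hw ↦ ?_)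
  obtain ⟨c, y, hy, hyt, rfl⟩ := h.exists_skew_add hw
  have hxy := hsq (x + y) (D.add_mem hx hy) (by rw [transpose_add, hxt, hyt, neg_add])
  rw [mul_add, add_mul, add_mul, hsq x hx hxt, hsq y hy hyt, zero_add, add_zero] at hxy
  calc x * (c • E + y)ᵀ + (c • E + y) * xᵀ = c • (x * E) - c • (E * x) - (y * x + x * y) := by
        rw [transpose_add, transpose_smul, h.symm, hxt, hyt, mul_add, add_mul, mul_smul_comm,
          smul_mul_assoc, mul_neg, mul_neg, mul_neg, smul_neg]
        abel
    _ = 0 := by rw [hxy, h.left_mul x hx, h.mul_right x hx, sub_self, sub_zero]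

lemma exists_skew_mul_self_eq [IsAlgClosed F] (h : IsQuadraticCorner D E)
    (hmul : ∀ x ∈ D, ∀ y ∈ D, x * y ∈ D) (hx : x ∈ D) (hxt : xᵀ = -x) (hx0 : x ≠ 0) :
    ∃ i ∈ D, iᵀ = -i ∧ i * i = E := by
  obtain ⟨w, hw, hwt, hww⟩ := h.exists_skew_mul_self_ne_zero hx hxt hx0
  obtain ⟨c, hc⟩ := h.exists_smul _ (hmul _ hw _ hw)
  rw [transpose_mul, hwt, neg_mul_neg, ← two_smul F] at hc
  have hc0 : c ≠ 0 := by
    rintro rfl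
    rw [zero_smul] at hc
    exact hww ((smul_eq_zero.mp hc).resolve_left two_ne_zero)
  obtain ⟨d, hd⟩ := IsAlgClosed.exists_pow_nat_eq (2 * c⁻¹) (n := 2) two_pos
  refine ⟨d • w, D.smul_mem _ hw, by rw [transpose_smul, hwt, smul_neg], ?_⟩
  rw [smul_mul_smul_comm, ← pow_two, hd, mul_comm, mul_smul, hc, smul_smul, inv_mul_cancel₀ hc0,
    one_smul]

-- For `i` skew with `i² = E` take `p = (E + i) / 2`.
lemma exists_isIsotropicIdempotent [IsAlgClosed F] (h : IsQuadraticCorner D E)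
    (hmul : ∀ x ∈ D, ∀ y ∈ D, x * y ∈ D) (hx : x ∈ D) (hxt : xᵀ = -x) (hx0 : x ≠ 0) :
    ∃ p, IsIsotropicIdempotent D E p := by
  obtain ⟨i, hi, hit, hii⟩ := h.exists_skew_mul_self_eq hmul hx hxt hx0
  have hEE := h.left_mul E h.mem
  have hEi := h.left_mul i hi
  have hiE := h.mul_right i hi
  have hpt : ((2 : F)⁻¹ • (E + i))ᵀ = (2 : F)⁻¹ • (E - i) := by
    rw [transpose_smul, transpose_add, h.symm, hit, sub_eq_add_neg]
  have half_smul (z : Matrix N N F) : (2 : F)⁻¹ • (z + z) = z := by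
    rw [← two_smul F, inv_smul_smul₀ two_ne_zero]
  refine ⟨(2 : F)⁻¹ • (E + i), D.smul_mem _ (D.add_mem h.mem hi), ?_, ?_, ?_, ?_⟩
  · rw [smul_mul_smul_comm, mul_add, add_mul, add_mul, hEE, hii, hEi, hiE, mul_smul, add_comm i,
      half_smul]
  · rw [hpt, smul_mul_smul_comm, mul_sub, add_mul, add_mul, hEE, hii, hEi, hiE, add_comm i,
      sub_self, smul_zero]
  · rw [hpt, smul_mul_smul_comm, mul_add, sub_mul, sub_mul, hEE, hii, hEi, hiE, add_comm,
      sub_add_sub_cancel, sub_self, smul_zero]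
  · rw [hpt, ← smul_add, add_add_sub_cancel, half_smul]

theorem hasSkewCentralizer [IsAlgClosed F] (h : IsQuadraticCorner D E)
    (hmul : ∀ x ∈ D, ∀ y ∈ D, x * y ∈ D) (hx : x ∈ D) (hxt : xᵀ = -x) (hx0 : x ≠ 0) :
    HasSkewCentralizer D E := by
  obtain ⟨p, hp⟩ := h.exists_isIsotropicIdempotent hmul hx hxt hx0
  by_cases hoff : ∀ w ∈ D, p * w * pᵀ = 0 ∧ pᵀ * w * p = 0
  · exact hp.hasSkewCentralizer_of_offdiagonal_eq_zero h hoff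
  push Not at hoff
  obtain ⟨w, hw, hpqw⟩ := hoff
  by_cases hpw : p * w * pᵀ = 0
  · refine (hp.transpose h).hasSkewCentralizer_of_offdiagonal_ne_zero h hmul hw ?_
    rw [transpose_transpose]
    exact hpqw hpw
  · exact hp.hasSkewCentralizer_of_offdiagonal_ne_zero h hmul hw hpw

end IsQuadraticCorner

end QuadraticCorner

section CoordinateSpace

variable {F N : Type*} [Field F] [Fintype N]

lemma exists_skew_mul_eq_self {E : Matrix N N F} (hidem : IsIdempotentElem E) (hr : 2 ≤ E.rank) :
    ∃ s : Matrix N N F, s ≠ 0 ∧ sᵀ = -s ∧ E * s = s := by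
  have : Nontrivial (LinearMap.range E.mulVecLin) :=
    Module.nontrivial_of_finrank_pos (two_pos.trans_le hr)
  obtain ⟨v, hv0⟩ := exists_ne (0 : LinearMap.range E.mulVecLin)
  obtain ⟨w, hvw⟩ := exists_linearIndependent_pair_of_one_lt_finrank hr hv0
  have hE (x : LinearMap.range E.mulVecLin) : E *ᵥ x.1 = x.1 := by
    obtain ⟨y, hy⟩ := x.2
    rw [← hy, mulVecLin_apply, mulVec_mulVec, hidem.eq]
  refine ⟨vecMulVec v w - vecMulVec w v, fun hzero ↦ ?_, ?_, ?_⟩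
  · obtain ⟨k, hk⟩ : ∃ k, v.1 k ≠ 0 := Function.ne_iff.mp (Subtype.coe_ne_coe.mpr hv0)
    refine hk (neg_eq_zero.mp (LinearIndependent.pair_iff.mp hvw (w.1 k) (-(v.1 k)) ?_).2)
    refine Subtype.ext (funext fun i ↦ ?_)
    have hik : v.1 i * w.1 k - w.1 i * v.1 k = 0 := congrFun₂ hzero i k
    simp only [Submodule.coe_add, Submodule.coe_smul, Pi.add_apply, Pi.smul_apply, smul_eq_mul,
      Submodule.coe_zero, Pi.zero_apply]
    linear_combination hik
  · rw [transpose_sub, transpose_vecMulVec, transpose_vecMulVec, neg_sub]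
  · rw [mul_sub, mul_vecMulVec, mul_vecMulVec, hE, hE]

namespace IsQuadraticCorner

variable {D : Submodule F (Matrix N N F)} {E w x : Matrix N N F}

lemma commute_of_finrank_le_two (h : IsQuadraticCorner D E) (hD : Module.finrank F D ≤ 2)
    (hx : x ∈ D) (hw : w ∈ D) : Commute x w := by
  have hE (y : Matrix N N F) (hy : y ∈ D) : Commute E y :=
    (h.left_mul y hy).trans (h.mul_right y hy).symm
  by_cases hxE : ∃ c : F, c • E = x
  · obtain ⟨c, rfl⟩ := hxE
    exact (hE w hw).smul_left c
  have hli : LinearIndependent F ![E, x] :=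
    (LinearIndependent.pair_iff' h.ne_zero).mpr (not_exists.mp hxE)
  have hspan : Submodule.span F {E, x} = D := by
    refine Submodule.eq_of_le_of_finrank_le
      (Submodule.span_le.mpr (Set.pair_subset h.mem hx)) (hD.trans_eq ?_)
    rw [← Matrix.range_cons_cons_empty, finrank_span_eq_card hli, Fintype.card_fin]
  obtain ⟨a, b, rfl⟩ := Submodule.mem_span_pair.mp (hspan ▸ hw)
  exact ((hE x hx).symm.smul_right a).add_right ((Commute.refl x).smul_right b)

lemma hasSkewCentralizer_of_two_le_rank [NeZero (2 : F)] [IsAlgClosed F]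
    (h : IsQuadraticCorner D E) (hr : 2 ≤ E.rank)
    (hD : (∀ x ∈ D, ∀ y ∈ D, x * y ∈ D) ∨ Module.finrank F D ≤ 2) : HasSkewCentralizer D E := by
  by_cases hskew : ∃ x ∈ D, xᵀ = -x ∧ x ≠ 0
  · obtain ⟨x, hx, hxt, hx0⟩ := hskew
    rcases hD with hmul | hD
    · exact h.hasSkewCentralizer hmul hx hxt hx0
    · exact ⟨x, hx0, hxt, h.left_mul x hx, fun w hw ↦ h.commute_of_finrank_le_two hD hx hw⟩
  · push Not at hskew
    obtain ⟨s, hs0, hst, hEs⟩ := exists_skew_mul_eq_self (h.left_mul E h.mem) hr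
    have hsE : s * E = s := by
      simpa [transpose_mul, h.symm, hst] using congrArg transpose hEs
    refine ⟨s, hs0, hst, hEs, fun w hw ↦ ?_⟩
    obtain ⟨c, y, hy, hyt, rfl⟩ := h.exists_skew_add hw
    rw [hskew y hy hyt, add_zero]
    exact Commute.smul_right (hsE.trans hEs.symm) c

end IsQuadraticCorner

variable [DecidableEq N]

/-- The Peirce block `e A f` moved into the corner of `e` by means of the connecting element `u`.
For `e ⟂ f` this is the coordinate algebra of `A` in Jacobson's coordinatization theorem. -/
def coordinateSpace (A : Submodule F (Matrix N N F)) (e f u : Matrix N N F) :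
    Submodule F (Matrix N N F) :=
  (peirceBlock A e f).map (LinearMap.mulRight F uᵀ)

variable {A : Submodule F (Matrix N N F)} {e f u x y : Matrix N N F}

lemma mem_coordinateSpace :
    x ∈ coordinateSpace A e f u ↔ ∃ y ∈ peirceBlock A e f, y * uᵀ = x := by
  simp only [coordinateSpace, Submodule.mem_map, LinearMap.mulRight_apply]

lemma mul_transpose_mem_coordinateSpace (hy : y ∈ peirceBlock A e f) :
    y * uᵀ ∈ coordinateSpace A e f u :=
  mem_coordinateSpace.mpr ⟨y, hy, rfl⟩

variable [NeZero (2 : F)]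

lemma finrank_peirceBlock_le_rank (hA : IsSymmJordan A) (hnd : IsNondegenerate A)
    (he : IsAbsPrimitive A e) (hf : IsAbsPrimitive A f) (hfe : f * e = 0) :
    Module.finrank F (peirceBlock A e f) ≤ e.rank := by
  obtain ⟨v, hfv, hvv⟩ :=
    exists_anisotropic_mulVec_eq_self (hA.symm f hf.mem) hf.idem hf.ne_zero
  let φ : peirceBlock A e f →ₗ[F] LinearMap.range e.mulVecLin :=
    e.mulVecLin.rangeRestrict ∘ₗ (mulVecBilin F F).flip v ∘ₗ (peirceBlock A e f).subtype
  have hφ : Function.Injective φ := by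
    refine (injective_iff_map_eq_zero φ).mpr fun y hy ↦ Subtype.ext ?_
    refine eq_zero_of_mem_peirceBlock_of_mulVec_eq_zero hA hnd he hf hfe y.2 hfv hvv ?_
    calc y.1 *ᵥ v = e *ᵥ y.1 *ᵥ v := by rw [mulVec_mulVec, peirceBlock_left_mul he.idem y.2]
      _ = 0 := congrArg Subtype.val hy
  exact LinearMap.finrank_le_finrank_of_injective hφ

lemma IsConnecting.isQuadraticCorner (hA : IsSymmJordan A) (hnd : IsNondegenerate A)
    (he : IsAbsPrimitive A e) (hf : IsAbsPrimitive A f) (hef : e * f = 0)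
    (hu : IsConnecting A e f u) : IsQuadraticCorner (coordinateSpace A e f u) e where
  symm := hA.symm e he.mem
  ne_zero := he.ne_zero
  mem := mem_coordinateSpace.mpr ⟨u, hu.mem, hu.mul_transpose⟩
  left_mul x hx := by
    obtain ⟨y, hy, rfl⟩ := mem_coordinateSpace.mp hx
    rw [← mul_assoc, peirceBlock_left_mul he.idem hy]
  mul_right x hx := by
    obtain ⟨y, -, rfl⟩ := mem_coordinateSpace.mp hx
    rw [mul_assoc, peirceBlock_mul_right he.idem (hu.transpose hA he.mem hf.mem).mem]
  exists_smul x hx := by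
    obtain ⟨y, hy, rfl⟩ := mem_coordinateSpace.mp hx
    rw [Matrix.transpose_mul, transpose_transpose]
    exact exists_mul_transpose_add_eq_smul hA he hf.mem hf.idem hy hu.mem
  nondegenerate x hx hxw := by
    obtain ⟨y, hy, rfl⟩ := mem_coordinateSpace.mp hx
    have hnorm {a b : Matrix N N F} (ha : a ∈ peirceBlock A e f) :
        a * uᵀ * (b * uᵀ)ᵀ = a * bᵀ := by
      rw [Matrix.transpose_mul, transpose_transpose, mul_assoc, ← mul_assoc uᵀ, hu.transpose_mul,
        ← mul_assoc, peirceBlock_mul_right hf.idem ha]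
    rw [eq_zero_of_orthogonal hA hnd he hf hef hy, zero_mul]
    intro v hv
    rw [← hnorm (b := v) hy, ← hnorm (b := y) hv, hxw _ (mul_transpose_mem_coordinateSpace hv)]

end CoordinateSpace

section ConnectedFrame

variable {F N ι : Type*} [Field F] [Fintype N] [DecidableEq N]

/-- A frame all of whose members are connected to the base member `e z`; the connecting element
of `e z` with itself is normalized to `e z`. -/
structure IsConnectedFrame (A : Submodule F (Matrix N N F)) (e : ι → Matrix N N F) (z : ι)
    (u : ι → Matrix N N F) : Prop extends IsFrame A e where
  connecting : ∀ i, IsConnecting A (e z) (e i) (u i)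
  base : u z = e z

variable {A : Submodule F (Matrix N N F)} {e u : ι → Matrix N N F} {z i j k : ι}
  {a : Matrix N N F}

namespace IsConnectedFrame

lemma rank_eq (hA : IsSymmJordan A) (h : IsConnectedFrame A e z u) (i : ι) :
    (e i).rank = (e z).rank :=
  ((h.connecting i).rank_eq hA (h.prim z) (h.prim i)).symm

lemma mul_right (h : IsConnectedFrame A e z u) (i : ι) : u i * e i = u i :=
  peirceBlock_mul_right (h.prim i).idem (h.connecting i).mem

lemma transpose_mem (hA : IsSymmJordan A) (h : IsConnectedFrame A e z u) (i : ι) :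
    (u i)ᵀ ∈ peirceBlock A (e i) (e z) :=
  ((h.connecting i).transpose hA (h.prim z).mem (h.prim i).mem).mem

lemma base_mul_sum [Fintype ι] (hA : IsSymmJordan A) (h : IsConnectedFrame A e z u)
    {s : Matrix N N F} (hes : e z * s = s) (hse : s * e z = s) :
    e z * ∑ k, (u k)ᵀ * s * u k = s := by
  rw [Finset.mul_sum, Finset.sum_eq_single z]
  · rw [h.base, hA.symm _ (h.prim z).mem, hes, hse, hes]
  · intro k _ hk
    rw [← peirceBlock_left_mul (h.prim k).idem (h.transpose_mem hA k), mul_assoc (e k),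
      mul_assoc (e k), ← mul_assoc, h.ortho hk.symm, zero_mul]
  · exact fun hz ↦ absurd (Finset.mem_univ z) hz

variable [NeZero (2 : F)]

lemma coordinateSpace_le (hA : IsSymmJordan A) (h : IsConnectedFrame A e z u) (hzj : z ≠ j)
    (hzk : z ≠ k) :
    coordinateSpace A (e z) (e k) (u k) ≤ coordinateSpace A (e z) (e j) (u j) := by
  intro x hx
  obtain ⟨y, hy, rfl⟩ := mem_coordinateSpace.mp hx
  refine mem_coordinateSpace.mpr ⟨y * ((u k)ᵀ * u j), ?_, ?_⟩
  · rcases eq_or_ne k j with rfl | hkj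
    · rwa [(h.connecting k).transpose_mul, peirceBlock_mul_right (h.prim k).idem hy]
    · exact h.toIsFrame.mul_mem_peirceBlock hA hzk hzj hy (h.toIsFrame.mul_mem_peirceBlock hA
        hzk.symm hkj (h.transpose_mem hA k) (h.connecting j).mem)
  · rw [mul_assoc, mul_assoc, (h.connecting j).mul_transpose,
      peirceBlock_mul_right (h.prim z).idem (h.transpose_mem hA k)]

lemma mul_mul_transpose_mem_coordinateSpace_of_ne (hA : IsSymmJordan A)
    (h : IsConnectedFrame A e z u) (hzj : z ≠ j) (i : ι) (hzk : z ≠ k) (ha : a ∈ A) :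
    u i * a * (u k)ᵀ ∈ coordinateSpace A (e z) (e j) (u j) := by
  refine h.coordinateSpace_le hA hzj hzk
    (mem_coordinateSpace.mpr ⟨u i * (e i * a * e k), ?_, ?_⟩)
  · have hblock : e i * a * e k ∈ peirceBlock A (e i) (e k) := mul_mul_mem_peirceBlock ha
    rcases eq_or_ne z i with rfl | hzi
    · rwa [h.base, peirceBlock_left_mul (h.prim z).idem hblock]
    · exact h.toIsFrame.mul_mem_peirceBlock hA hzi hzk (h.connecting i).mem hblock
  · calc u i * (e i * a * e k) * (u k)ᵀ = u i * e i * a * (e k * (u k)ᵀ) := by noncomm_ring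
      _ = u i * a * (u k)ᵀ := by
        rw [h.mul_right, peirceBlock_left_mul (h.prim k).idem (h.transpose_mem hA k)]

lemma isQuadraticCorner (hA : IsSymmJordan A) (hnd : IsNondegenerate A)
    (h : IsConnectedFrame A e z u) (hzj : z ≠ j) :
    IsQuadraticCorner (coordinateSpace A (e z) (e j) (u j)) (e z) :=
  (h.connecting j).isQuadraticCorner hA hnd (h.prim z) (h.prim j) (h.ortho hzj)

lemma mul_mul_transpose_mem_coordinateSpace (hA : IsSymmJordan A) (hnd : IsNondegenerate A)
    (h : IsConnectedFrame A e z u) (hzj : z ≠ j) (i k : ι) (ha : a ∈ A) :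
    u i * a * (u k)ᵀ ∈ coordinateSpace A (e z) (e j) (u j) := by
  have hcorner := h.isQuadraticCorner hA hnd hzj
  rcases eq_or_ne z k with rfl | hzk
  · rcases eq_or_ne z i with rfl | hzi
    · obtain ⟨c, hc⟩ := (h.prim z).exists_smul a ha
      rw [h.base, hcorner.symm, hc]
      exact Submodule.smul_mem _ c hcorner.mem
    · have hmem := hcorner.transpose_mem
        (h.mul_mul_transpose_mem_coordinateSpace_of_ne hA hzj z hzi ha)
      rwa [transpose_mul, transpose_mul, transpose_transpose, hA.symm a ha, ← mul_assoc] at hmem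
  · exact h.mul_mul_transpose_mem_coordinateSpace_of_ne hA hzj i hzk ha

-- With `x = y (u j)ᵀ` and `w = v (u k)ᵀ`, the product `x w = (y (u j)ᵀ v) (u k)ᵀ` only involves
-- products of Peirce blocks with distinct outer indices.
lemma mul_mem_coordinateSpace (hA : IsSymmJordan A) (h : IsConnectedFrame A e z u) (hzj : z ≠ j)
    (hzk : z ≠ k) (hjk : j ≠ k) {x w : Matrix N N F}
    (hx : x ∈ coordinateSpace A (e z) (e j) (u j))
    (hw : w ∈ coordinateSpace A (e z) (e j) (u j)) :
    x * w ∈ coordinateSpace A (e z) (e j) (u j) := by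
  obtain ⟨y, hy, rfl⟩ := mem_coordinateSpace.mp hx
  obtain ⟨v, hv, rfl⟩ := mem_coordinateSpace.mp (h.coordinateSpace_le hA hzk hzj hw)
  refine h.coordinateSpace_le hA hzj hzk
    (mem_coordinateSpace.mpr ⟨y * ((u j)ᵀ * v), ?_, by noncomm_ring⟩)
  exact h.toIsFrame.mul_mem_peirceBlock hA hzj hzk hy
    (h.toIsFrame.mul_mem_peirceBlock hA hzj.symm hjk (h.transpose_mem hA j) hv)

-- The matrix `∑ k, (u k)ᵀ s (u k)` repeats `s` along the diagonal of the frame.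
lemma exists_skew_commute_of_hasSkewCentralizer [Finite ι] (hA : IsSymmJordan A)
    (hnd : IsNondegenerate A) (h : IsConnectedFrame A e z u) (hzj : z ≠ j)
    (hs : HasSkewCentralizer (coordinateSpace A (e z) (e j) (u j)) (e z)) :
    ∃ t : Matrix N N F, t ≠ 0 ∧ tᵀ = -t ∧ ∀ a ∈ A, Commute t a := by
  cases nonempty_fintype ι
  obtain ⟨s, hs0, hst, hes, hcomm⟩ := hs
  have hse : s * e z = s := (hcomm _ (h.isQuadraticCorner hA hnd hzj).mem).eq.trans hes
  refine ⟨∑ k, (u k)ᵀ * s * u k, fun hzero ↦ hs0 ?_, ?_, fun a ha ↦ ?_⟩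
  · rw [← h.base_mul_sum hA hes hse, hzero, mul_zero]
  · rw [transpose_sum, ← Finset.sum_neg_distrib]
    refine Finset.sum_congr rfl fun k _ ↦ ?_
    rw [transpose_mul, transpose_mul, transpose_transpose, hst, neg_mul, mul_neg, ← mul_assoc]
  · have hunit := h.sum_mul_eq_self_and_mul_sum_eq_self hA.closed hnd ha
    simp_rw [← fun k ↦ (h.connecting k).transpose_mul] at hunit
    calc (∑ k, (u k)ᵀ * s * u k) * a
        = (∑ k, (u k)ᵀ * s * u k) * (a * ∑ i, (u i)ᵀ * u i) := by rw [hunit.2]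
      _ = ∑ k, ∑ i, (u k)ᵀ * (s * (u k * a * (u i)ᵀ)) * u i := by
          rw [Finset.mul_sum, Finset.sum_mul_sum]
          simp only [mul_assoc]
      _ = ∑ k, ∑ i, (u k)ᵀ * (u k * a * (u i)ᵀ * s) * u i := by
          simp_rw [fun k i ↦ (hcomm _ (h.mul_mul_transpose_mem_coordinateSpace hA hnd hzj k i
            ha)).eq]
      _ = (∑ k, (u k)ᵀ * u k) * a * ∑ i, (u i)ᵀ * s * u i := by
          rw [Finset.sum_mul, Finset.sum_mul_sum]
          simp only [mul_assoc]
      _ = a * ∑ i, (u i)ᵀ * s * u i := by rw [hunit.1]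

end IsConnectedFrame

end ConnectedFrame

section Orbit

variable {F N : Type*} [Field F]

lemma forall_exists_mulVec_eq_of_symSub_le_sup {n : ℕ}
    {A B : Submodule F (Matrix (Fin n) (Fin n) F)} (hsum : symSub F n ≤ A ⊔ B) {v : Fin n → F}
    (hv : v ≠ 0) (hBv : ∀ b ∈ B, b *ᵥ v = 0) (w : Fin n → F) : ∃ a ∈ A, a *ᵥ v = w := by
  obtain ⟨X, hX, rfl⟩ := exists_symm_mulVec_eq hv w
  obtain ⟨a, ha, b, hb, rfl⟩ := Submodule.mem_sup.mp (hsum hX)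
  exact ⟨a, ha, by rw [add_mulVec, hBv b hb, add_zero]⟩

variable [Fintype N] {A : Submodule F (Matrix N N F)}

lemma card_le_finrank_of_forall_exists_mulVec_eq {v : N → F} (hv : ∀ w, ∃ a ∈ A, a *ᵥ v = w) :
    Fintype.card N ≤ Module.finrank F A := by
  let φ : A →ₗ[F] N → F := (mulVecBilin F F).flip v ∘ₗ A.subtype
  have hφ : Function.Surjective φ := fun w ↦ by
    obtain ⟨a, ha, rfl⟩ := hv w
    exact ⟨⟨a, ha⟩, rfl⟩
  simpa using LinearMap.finrank_le_finrank_of_surjective hφ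

-- For `a ∈ A` the bilinear form `(t v) · (a v)` equals its own negative, so `t v ⟂ A v`.
lemma eq_zero_of_skew_commute [NeZero (2 : F)] {v : N → F} {t : Matrix N N F} (hA : ∀ a ∈ A, aᵀ = a)
    (hv : ∀ w, ∃ a ∈ A, a *ᵥ v = w) (hskew : tᵀ = -t) (hcomm : ∀ a ∈ A, Commute t a) : t = 0 := by
  have htv : t *ᵥ v = 0 := by
    refine dotProduct_eq_zero _ fun w ↦ ?_
    obtain ⟨a, ha, rfl⟩ := hv w
    have hneg : t *ᵥ v ⬝ᵥ a *ᵥ v = -(t *ᵥ v ⬝ᵥ a *ᵥ v) := by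
      calc t *ᵥ v ⬝ᵥ a *ᵥ v = v ⬝ᵥ tᵀ *ᵥ a *ᵥ v := by
            rw [dotProduct_mulVec v, vecMul_transpose]
        _ = -(v ⬝ᵥ a *ᵥ t *ᵥ v) := by
            rw [hskew, neg_mulVec, dotProduct_neg, mulVec_mulVec, (hcomm a ha).eq, ← mulVec_mulVec]
        _ = -(t *ᵥ v ⬝ᵥ a *ᵥ v) := by
            rw [dotProduct_mulVec_eq_mulVec_dotProduct (hA a ha), dotProduct_comm]
    exact (mul_eq_zero.mp ((two_mul _).trans (eq_neg_iff_add_eq_zero.mp hneg))).resolve_left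
      two_ne_zero
  classical
  refine ext_of_mulVec_single fun i ↦ ?_
  obtain ⟨a, ha, hav⟩ := hv (Pi.single i 1)
  rw [← hav, mulVec_mulVec, (hcomm a ha).eq, ← mulVec_mulVec, htv, mulVec_zero, zero_mulVec]

end Orbit

section SimpleSymmetric

lemma three_le_or_eq_two_of_mul_le {m r : ℕ} (hm : 0 < m) (hr : 2 ≤ r)
    (h : 2 * (m * r) ≤ 2 * m + r * (m * (m - 1))) : 3 ≤ m ∨ m = 2 ∧ r = 2 := by
  by_contra! hlt
  have hm' : m = 1 ∨ m = 2 := by lia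
  rcases hm' with rfl | rfl <;> lia

variable {F N : Type*} [Field F] [Fintype N] [DecidableEq N]
  {A : Submodule F (Matrix N N F)}

lemma IsConnectedFrame.mul_rank_le_card {m : ℕ} {e u : Fin m → Matrix N N F} {z : Fin m}
    (hA : IsSymmJordan A) (h : IsConnectedFrame A e z u) :
    m * (e z).rank ≤ Fintype.card N := by
  simpa [h.rank_eq hA] using sum_rank_le_card h.orthogonalIdempotents

variable [NeZero (2 : F)]

lemma IsFrame.exists_mulVec_eq_zero {ι : Type*} [Fintype ι] {e : ι → Matrix N N F}
    (hA : IsSymmJordan A) (hnd : IsNondegenerate A) (he : IsFrame A e) (hsum : ∑ i, e i ≠ 1) :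
    ∃ v ≠ 0, ∀ a ∈ A, a *ᵥ v = 0 := by
  obtain ⟨v, hv⟩ : ∃ v, (1 - ∑ i, e i) *ᵥ v ≠ 0 := by
    by_contra! hzero
    refine hsum (sub_eq_zero.mp (ext_of_mulVec_single fun i ↦ ?_)).symm
    rw [hzero, zero_mulVec]
  refine ⟨_, hv, fun a ha ↦ ?_⟩
  rw [mulVec_mulVec, mul_sub, mul_one,
    (he.sum_mul_eq_self_and_mul_sum_eq_self hA.closed hnd ha).2, sub_self, zero_mulVec]

variable [IsAlgClosed F]

-- Either a third frame index makes the coordinate space an algebra, or the bound on `dim A`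
-- only leaves two idempotents of rank two.
lemma IsConnectedFrame.exists_skew_commute {m : ℕ} {e u : Fin m → Matrix N N F} {z : Fin m}
    (hA : IsSymmJordan A) (hnd : IsNondegenerate A) (h : IsConnectedFrame A e z u)
    (hr : 2 ≤ (e z).rank) (hdim : Fintype.card N ≤ Module.finrank F A) :
    ∃ t : Matrix N N F, t ≠ 0 ∧ tᵀ = -t ∧ ∀ a ∈ A, Commute t a := by
  have hcard : m * (e z).rank ≤ Fintype.card N := h.mul_rank_le_card hA
  have hfinrank := h.two_mul_finrank_le hA hnd (h.rank_eq hA)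
  have hm := three_le_or_eq_two_of_mul_le (m := m) z.pos hr (by lia)
  have : Nontrivial (Fin m) := Fin.nontrivial_iff_two_le.mpr (by lia)
  obtain ⟨j, hj⟩ := exists_ne z
  refine h.exists_skew_commute_of_hasSkewCentralizer hA hnd hj.symm
    ((h.isQuadraticCorner hA hnd hj.symm).hasSkewCentralizer_of_two_le_rank hr ?_)
  rcases hm with hm | ⟨-, hr⟩
  · obtain ⟨k, hkz, hkj⟩ := Fin.exists_ne_and_ne_of_two_lt z j hm
    exact .inl fun x hx y hy ↦ h.mul_mem_coordinateSpace hA hj.symm hkz.symm hkj.symm hx hy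
  · right
    calc Module.finrank F (coordinateSpace A (e z) (e j) (u j))
        ≤ Module.finrank F (peirceBlock A (e z) (e j)) := Submodule.finrank_map_le _ _
      _ ≤ (e z).rank := finrank_peirceBlock_le_rank hA hnd (h.prim z) (h.prim j) (h.ortho hj)
      _ = 2 := hr

theorem exists_isConnectedFrame (hA : IsSymmJordan A) (hs : IsJordanSimple A) :
    ∃ (m : ℕ) (e : Fin m → Matrix N N F) (z : Fin m) (u : Fin m → Matrix N N F),
      IsConnectedFrame A e z u := by
  obtain ⟨m, e, he⟩ := exists_isFrame hA.closed hs.isNondegenerate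
  obtain ⟨z⟩ : Nonempty (Fin m) := by
    by_contra! hempty
    obtain ⟨x, hx, y, -, hxy⟩ := hs.exists_ne_zero
    have hx0 := (he.sum_mul_eq_self_and_mul_sum_eq_self hA.closed hs.isNondegenerate hx).1
    rw [Finset.univ_eq_empty, Finset.sum_empty, zero_mul] at hx0
    simp [← hx0] at hxy
  have hconn (i : Fin m) : ∃ u, IsConnecting A (e z) (e i) u ∧ (i = z → u = e z) := by
    rcases eq_or_ne i z with rfl | hiz
    · exact ⟨e i, (he.prim i).isConnecting_self hA, fun _ ↦ rfl⟩
    · obtain ⟨u, hu⟩ := he.exists_isConnecting hA hs z i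
      exact ⟨u, hu, fun hi ↦ absurd hi hiz⟩
  choose u hu hbase using hconn
  exact ⟨m, e, z, u, he, hu, hbase z rfl⟩

lemma IsConnectedFrame.two_le_rank {ι : Type*} [Fintype ι] {e u : ι → Matrix N N F} {z : ι}
    (hA : IsSymmJordan A) (hs : IsJordanSimple A) (h : IsConnectedFrame A e z u)
    (hsum : ∑ i, e i = 1) (hproper : ∃ X, Xᵀ = X ∧ X ∉ A) : 2 ≤ (e z).rank := by
  obtain ⟨X, hX, hXA⟩ := hproper
  by_contra! hrank
  exact hXA (h.mem_of_rank_le_one hA (h.exists_isConnecting hA hs)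
    (fun i ↦ (h.rank_eq hA i).trans_le (Nat.le_of_lt_succ hrank)) hsum hX)

theorem exists_mulVec_eq_zero_or_four_mul_finrank_lt (hA : IsSymmJordan A)
    (hs : IsJordanSimple A) (hproper : ∃ X, Xᵀ = X ∧ X ∉ A) :
    (∃ v ≠ 0, ∀ a ∈ A, a *ᵥ v = 0) ∨
      4 * Module.finrank F A < Fintype.card N * (Fintype.card N + 1) := by
  obtain ⟨m, e, z, u, h⟩ := exists_isConnectedFrame hA hs
  by_cases hsum : ∑ i, e i = 1
  · right
    have hrank : 2 ≤ (e z).rank := h.two_le_rank hA hs hsum hproper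
    have hcard : m * (e z).rank ≤ Fintype.card N := h.mul_rank_le_card hA
    calc 4 * Module.finrank F A = 2 * (2 * Module.finrank F A) := by ring
      _ ≤ 2 * (2 * m + (e z).rank * (m * (m - 1))) := by
          gcongr
          exact h.two_mul_finrank_le hA hs.isNondegenerate (h.rank_eq hA)
      _ < m * (e z).rank * (m * (e z).rank + 1) := four_mul_add_lt z.pos hrank
      _ ≤ Fintype.card N * (Fintype.card N + 1) := by gcongr
  · exact .inl (h.exists_mulVec_eq_zero hA hs.isNondegenerate hsum)

theorem not_forall_exists_mulVec_eq (hA : IsSymmJordan A)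
    (hs : IsJordanSimple A) (hproper : ∃ X, Xᵀ = X ∧ X ∉ A) (v : N → F) :
    ¬ ∀ w, ∃ a ∈ A, a *ᵥ v = w := by
  intro hv
  have hnd := hs.isNondegenerate
  obtain ⟨m, e, z, u, h⟩ := exists_isConnectedFrame hA hs
  by_cases hsum : ∑ i, e i = 1
  · obtain ⟨t, ht, hskew, hcomm⟩ := h.exists_skew_commute hA hnd
      (h.two_le_rank hA hs hsum hproper) (card_le_finrank_of_forall_exists_mulVec_eq hv)
    exact ht (eq_zero_of_skew_commute hA.symm hv hskew hcomm)
  · obtain ⟨k, hk, hAk⟩ := h.exists_mulVec_eq_zero hA hnd hsum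
    refine hk (dotProduct_eq_zero _ fun w ↦ ?_)
    obtain ⟨a, ha, rfl⟩ := hv w
    rw [dotProduct_mulVec_eq_mulVec_dotProduct (hA.symm a ha), hAk a ha, zero_dotProduct]

end SimpleSymmetric

/-- over an algebraically closed field of characteristic `≠ 2`, the Jordan
algebra `H(F_n)` of symmetric `n×n` matrices is not the sum of two proper simple Jordan
subalgebras. -/
theorem HFn_not_sum_of_two_proper_simple
    (F : Type*) [Field F] [IsAlgClosed F] (hF : ringChar F ≠ 2)
    (n : ℕ) (hn : 1 ≤ n)
    (A B : Submodule F (Matrix (Fin n) (Fin n) F))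
    (hAle : A ≤ symSub F n) (hBle : B ≤ symSub F n)
    (hAcl : ∀ x ∈ A, ∀ y ∈ A, jp x y ∈ A) (hBcl : ∀ x ∈ B, ∀ y ∈ B, jp x y ∈ B)
    (hAp : A ≠ symSub F n) (hBp : B ≠ symSub F n)
    (hAs : IsSimpleJordan F A) (hBs : IsSimpleJordan F B) :
    A ⊔ B ≠ symSub F n := by
  have : NeZero (2 : F) := ⟨Ring.two_ne_zero hF⟩
  intro hsum
  have hA := hAs.isJordanSimple hAcl
  have hB := hBs.isJordanSimple hBcl
  have hAsymm : IsSymmJordan A := ⟨hA.closed, fun a ha ↦ hAle ha⟩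
  have hBsymm : IsSymmJordan B := ⟨hB.closed, fun b hb ↦ hBle hb⟩
  have hAproper := SetLike.exists_of_lt (hAle.lt_of_ne hAp)
  have hBproper := SetLike.exists_of_lt (hBle.lt_of_ne hBp)
  rcases exists_mulVec_eq_zero_or_four_mul_finrank_lt hAsymm hA hAproper with ⟨v, hv, hAv⟩ | hAdim
  · exact not_forall_exists_mulVec_eq hBsymm hB hBproper v
      (forall_exists_mulVec_eq_of_symSub_le_sup (sup_comm A B ▸ hsum.ge) hv hAv)
  rcases exists_mulVec_eq_zero_or_four_mul_finrank_lt hBsymm hB hBproper with ⟨v, hv, hBv⟩ | hBdim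
  · exact not_forall_exists_mulVec_eq hAsymm hA hAproper v
      (forall_exists_mulVec_eq_of_symSub_le_sup hsum.ge hv hBv)
  have hdim := mul_add_one_le_two_mul_finrank_symSub (F := F) n
  have hadd := Submodule.finrank_add_le_finrank_add_finrank A B
  rw [hsum] at hadd
  rw [Fintype.card_fin] at hAdim hBdim
  lia

end HFn
end

section
/- Let F be an algebraically closed field of characteristic zero, let V be a finite-dimensional F-vector space with a nondegenerate symmetric bilinear form f, and let v₀ ∈ V be a nonzero vector. Then for every w ∈ V there exists an F-linear operator T : V → V that is symmetric with respect to f (i.e. f(Tu, u') = f(u, Tu') for all u, u' ∈ V) such that T(v₀) = w. Equivalently, the set {T(v₀) : T symmetric with respect to f} equals V. -/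
/-!
Write `x ⊗ w` for the rank-one operator `u ↦ f(x, u) w`; its adjoint with respect to the symmetric
form `f` is `w ⊗ x`. If `f(x, v) = 1`, then `x ⊗ w` already sends `v` to `w`. Adding its adjoint
makes it symmetric at the cost of the extra term `f(w, v) x` in the value at `v`, and this term is
removed by subtracting the symmetric operator `f(w, v) x ⊗ x`.
-/

section AdjointPair

variable {R M : Type*} [CommSemiring R] [AddCommMonoid M] [Module R M] {f : M →ₗ[R] M →ₗ[R] R}

theorem isAdjointPair_smulRight (hf : f.IsSymm) (x w : M) :
    f.IsAdjointPair f ((f x).smulRight w) ((f w).smulRight x) := fun u u' ↦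
  calc
    f (f x u • w) u' = f x u * f w u' := by rw [map_smul, LinearMap.smul_apply, smul_eq_mul]
    _ = f w u' * f u x := by rw [mul_comm, ← hf.eq x u, RingHom.id_apply]
    _ = f u (f w u' • x) := by rw [map_smul, smul_eq_mul]

theorem isSelfAdjoint_smulRight_add_smulRight (hf : f.IsSymm) (x w : M) :
    f.IsSelfAdjoint ((f x).smulRight w + (f w).smulRight x) := by
  have h := (isAdjointPair_smulRight hf x w).add (isAdjointPair_smulRight hf w x)
  rwa [add_comm ⇑((f w).smulRight x)] at h

end AdjointPair

theorem symmetric_operators_act_transitively_general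
    {R M : Type*} [CommRing R] [AddCommGroup M] [Module R M] {f : M →ₗ[R] M →ₗ[R] R}
    (hf : f.IsSymm) {v : M} (hv : Function.Surjective (f v)) (w : M) :
    ∃ T : M →ₗ[R] M, f.IsSelfAdjoint T ∧ T v = w := by
  obtain ⟨x, hvx⟩ := hv 1
  have hxv : f x v = 1 := (hf.eq v x).symm.trans hvx
  refine ⟨(f x).smulRight w + (f w).smulRight x - f w v • (f x).smulRight x, ?_, ?_⟩
  · exact (isSelfAdjoint_smulRight_add_smulRight hf x w).sub
      ((isAdjointPair_smulRight hf x x).smul (f w v))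
  · simp [hxv]

/-- for a nondegenerate symmetric bilinear form `f` on a
finite-dimensional vector space `V` over an algebraically closed field of characteristic
zero and a nonzero vector `v₀`, every vector `w` can be reached as `T(v₀)` for some
linear operator `T` symmetric with respect to `f`. -/
theorem symmetric_operators_act_transitively
    (F : Type*) [Field F] [IsAlgClosed F] [CharZero F]
    (V : Type*) [AddCommGroup V] [Module F V] [FiniteDimensional F V]
    (f : V →ₗ[F] V →ₗ[F] F)
    (hsymm : ∀ u v : V, f u v = f v u)
    (hnd : ∀ v : V, (∀ u : V, f v u = 0) → v = 0)
    (v₀ : V) (hv₀ : v₀ ≠ 0) (w : V) :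
    ∃ T : V →ₗ[F] V, (∀ u u' : V, f (T u) u' = f u (T u')) ∧ T v₀ = w := by
  have hfv₀ : f v₀ ≠ 0 := fun h ↦ hv₀ (hnd v₀ (LinearMap.congr_fun h))
  exact symmetric_operators_act_transitively_general ⟨hsymm⟩ (LinearMap.surjective hfv₀) w
end
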